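/- Let R be a Cohen-Macaulay local ring and M a reduced G_C-perfect R-module of G_C-dimension n. Assume that M^C has finite G_C-dimension and that M^* = Hom_R(M,R) has finite projective dimension. Then depth_R(λM) = n + depth_R(Ext_R^n(M,C)). In particular, λM is a free R-module if and only if depth_R(Ext_R^n(M,C)) = dim(R) − n. -/

import Mathlib

open CategoryTheory TensorProduct

noncomputable section

universe u

variable (R : Type u) [CommRing R]

/-- The `i`-th Ext module `Ext_R^i(M, N)`. -/
def ExtM (M N : ModuleCat.{u} R) (i : ℕ) : ModuleCat.{u} R :=
  ((Ext R (ModuleCat.{u} R) i).obj (Opposite.op M)).obj N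

/-- The `i`-th Tor module `Tor_i^R(M, N)`. -/
def TorM (M N : ModuleCat.{u} R) (i : ℕ) : ModuleCat.{u} R :=
  ((Tor (ModuleCat.{u} R) i).obj M).obj N

/-- The biduality (evaluation) map `M → Hom_R(Hom_R(M, C), C)`. -/
def bidualityMap (C M : ModuleCat.{u} R) :
    ↥M →ₗ[R] ((↥M →ₗ[R] ↥C) →ₗ[R] ↥C) :=
  (LinearMap.id : (↥M →ₗ[R] ↥C) →ₗ[R] (↥M →ₗ[R] ↥C)).flip

/-- `C` is a semidualizing `R`-module. -/
def IsSemidualizing (C : ModuleCat.{u} R) : Prop :=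
  Module.Finite R ↥C ∧
  Function.Bijective (fun r : R => (r • LinearMap.id : ↥C →ₗ[R] ↥C)) ∧
  ∀ i : ℕ, 0 < i → Subsingleton (ExtM R C C i)

/-- `M` is totally `C`-reflexive. -/
def IsTotallyCReflexive (C M : ModuleCat.{u} R) : Prop :=
  Module.Finite R ↥M ∧
  Function.Bijective (bidualityMap R C M) ∧
  (∀ i : ℕ, 0 < i → Subsingleton (ExtM R M C i)) ∧
  (∀ i : ℕ, 0 < i → Subsingleton (ExtM R (ModuleCat.of R (↥M →ₗ[R] ↥C)) C i))

/-- `G_C`-dimension of `M` is at most `n`: there is an exact sequence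
`0 → X_n → ⋯ → X_0 → M → 0` with each `X_i` totally `C`-reflexive. -/
def gcdimLE (C : ModuleCat.{u} R) : ℕ → ModuleCat.{u} R → Prop
  | 0, M => IsTotallyCReflexive R C M
  | n+1, M => ∃ (X K : ModuleCat.{u} R) (f : ↥K →ₗ[R] ↥X) (g : ↥X →ₗ[R] ↥M),
      Function.Injective f ∧ Function.Surjective g ∧
      LinearMap.ker g = LinearMap.range f ∧
      IsTotallyCReflexive R C X ∧ gcdimLE C n K

/-- The `G_C`-dimension of `M`, as an element of `ℕ∞`. -/
def gcdim (C M : ModuleCat.{u} R) : ℕ∞ :=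
  sInf ((fun n : ℕ => (n : ℕ∞)) '' {n | gcdimLE R C n M})

/-- `grade_R(M) = inf { i | Ext_R^i(M, R) ≠ 0 }`, with `grade 0 = ∞`. -/
def gradeR (M : ModuleCat.{u} R) : ℕ∞ :=
  sInf ((fun i : ℕ => (i : ℕ∞)) ''
    {i | ¬ Subsingleton (ExtM R M (ModuleCat.of R R) i)})

/-- Reduced grade of `M` with respect to `C`. -/
def rgrade (C M : ModuleCat.{u} R) : ℕ∞ :=
  sInf ((fun i : ℕ => (i : ℕ∞)) ''
    {i | 0 < i ∧ ¬ Subsingleton (ExtM R M C i)})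

/-- `M` is reduced `G_C`-perfect. -/
def IsReducedGCPerfect (C M : ModuleCat.{u} R) : Prop :=
  gcdim R C M ≠ ⊤ ∧ rgrade R C M = gcdim R C M

/-- `M` is `G_C`-perfect. -/
def IsGCPerfect (C M : ModuleCat.{u} R) : Prop :=
  gcdim R C M ≠ ⊤ ∧ gradeR R M = gcdim R C M

/-- `π : P → M` is a projective cover: `P` projective, `π` surjective with superfluous kernel. -/
def IsProjectiveCover {P M : ModuleCat.{u} R} (π : ↥P →ₗ[R] ↥M) : Prop :=
  Module.Projective R ↥P ∧ Function.Surjective π ∧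
  ∀ N : Submodule R ↥P, N ⊔ LinearMap.ker π = ⊤ → N = ⊤

/-- `P₁ →d P₀ →π M → 0` is a minimal projective presentation of `M`. -/
def IsMinimalPresentation {P1 P0 M : ModuleCat.{u} R}
    (d : ↥P1 →ₗ[R] ↥P0) (π : ↥P0 →ₗ[R] ↥M) : Prop :=
  Module.Finite R ↥P1 ∧ Module.Finite R ↥P0 ∧
  IsProjectiveCover R π ∧
  LinearMap.range d = LinearMap.ker π ∧
  Module.Projective R ↥P1 ∧
  ∀ N : Submodule R ↥P1, N ⊔ LinearMap.ker d = ⊤ → N = ⊤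

/-- `T` is (a module isomorphic to) the transpose `Tr_C(M)` of `M` with respect to `C`,
computed from a minimal projective presentation of `M`. -/
def IsTransposeC (C M T : ModuleCat.{u} R) : Prop :=
  ∃ (P1 P0 : ModuleCat.{u} R) (d : ↥P1 →ₗ[R] ↥P0) (π : ↥P0 →ₗ[R] ↥M),
    IsMinimalPresentation R d π ∧
    Nonempty (↥T ≃ₗ[R]
      ((↥P1 →ₗ[R] ↥C) ⧸ LinearMap.range (LinearMap.lcomp R ↥C d)))

/-- `T` is the usual Auslander transpose `Tr(M) = Tr_R(M)`. -/
def IsTranspose (M T : ModuleCat.{u} R) : Prop :=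
  IsTransposeC R (ModuleCat.of R R) M T

/-- `S` is (a module isomorphic to) the first syzygy `Ω N`, i.e. the kernel of a
projective cover of `N`. -/
def IsSyzygyOf (N S : ModuleCat.{u} R) : Prop :=
  ∃ (P : ModuleCat.{u} R) (π : ↥P →ₗ[R] ↥N),
    Module.Finite R ↥P ∧ IsProjectiveCover R π ∧
    Nonempty (↥S ≃ₗ[R] LinearMap.ker π)

/-- `S` is (a module isomorphic to) the `n`-th syzygy `Ωⁿ M`. -/
def IsNthSyzygy : ℕ → ModuleCat.{u} R → ModuleCat.{u} R → Prop
  | 0, M, S => Nonempty (↥S ≃ₗ[R] ↥M)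
  | n+1, M, S => ∃ K : ModuleCat.{u} R, IsNthSyzygy n M K ∧ IsSyzygyOf R K S

/-- `L` is (a module isomorphic to) `λ M = Ω Tr M`. -/
def IsLambda (M L : ModuleCat.{u} R) : Prop :=
  ∃ T : ModuleCat.{u} R, IsTranspose R M T ∧ IsSyzygyOf R T L

/-- `M` is horizontally linked, i.e. `M ≅ λλM`. -/
def IsHorizontallyLinked (M : ModuleCat.{u} R) : Prop :=
  ∃ L L2 : ModuleCat.{u} R, IsLambda R M L ∧ IsLambda R L L2 ∧
    Nonempty (↥M ≃ₗ[R] ↥L2)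

/-- `M` is stable: it has no non-zero projective direct summand. -/
def IsStable (M : ModuleCat.{u} R) : Prop :=
  ∀ (P N : ModuleCat.{u} R), Module.Projective R ↥P →
    Nonempty (↥M ≃ₗ[R] (↥P × ↥N)) → Subsingleton ↥P

/-- `N` belongs to the Auslander class `A_C`. -/
def MemAuslanderClass (C N : ModuleCat.{u} R) : Prop :=
  Function.Bijective (TensorProduct.mk R ↥N ↥C) ∧
  (∀ i : ℕ, 0 < i → Subsingleton (TorM R C N i)) ∧
  (∀ i : ℕ, 0 < i → Subsingleton
    (ExtM R C (ModuleCat.of R (↥N ⊗[R] ↥C)) i))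

/-- `R` is semiperfect: every finite `R`-module has a projective cover. -/
def IsSemiperfectRing : Prop :=
  ∀ M : ModuleCat.{u} R, Module.Finite R ↥M →
    ∃ (P : ModuleCat.{u} R) (π : ↥P →ₗ[R] ↥M),
      Module.Finite R ↥P ∧ IsProjectiveCover R π

/-- Depth over a local ring, via Ext from the residue field. -/
def rdepth [IsLocalRing R] (M : ModuleCat.{u} R) : ℕ∞ :=
  sInf ((fun i : ℕ => (i : ℕ∞)) ''
    {i | ¬ Subsingleton
      (ExtM R (ModuleCat.of R (IsLocalRing.ResidueField R)) M i)})

/-- Projective dimension at most `n`. -/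
def pdimLE : ℕ → ModuleCat.{u} R → Prop
  | 0, M => Module.Projective R ↥M
  | n+1, M => ∃ (X K : ModuleCat.{u} R) (f : ↥K →ₗ[R] ↥X) (g : ↥X →ₗ[R] ↥M),
      Function.Injective f ∧ Function.Surjective g ∧
      LinearMap.ker g = LinearMap.range f ∧
      Module.Projective R ↥X ∧ pdimLE n K

/-- Projective dimension, as an element of `ℕ∞`. -/
def pdim (M : ModuleCat.{u} R) : ℕ∞ :=
  sInf ((fun n : ℕ => (n : ℕ∞)) '' {n | pdimLE R n M})

/-- `M` is `C`-`k`-torsionless. -/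
def IsCkTorsionless (C M : ModuleCat.{u} R) (k : ℕ) : Prop :=
  k = 0 ∨ ∀ T : ModuleCat.{u} R, IsTransposeC R C M T →
    ∀ i : ℕ, 1 ≤ i → i ≤ k → Subsingleton (ExtM R T C i)

/-- `M` is a `C`-syzygy: it embeds into `P ⊗_R C` with `P` finite projective. -/
def IsCSyzygy (C M : ModuleCat.{u} R) : Prop :=
  ∃ (P : ModuleCat.{u} R), Module.Finite R ↥P ∧ Module.Projective R ↥P ∧
    ∃ f : ↥M →ₗ[R] (↥P ⊗[R] ↥C), Function.Injective f


/-- There is an exact sequence `0 → N → X_k → ⋯ → X_1 → M → 0` of finite `R`-modules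
with `Ext_R^i(X_j, C) = 0` for all `i > 0` and all `j`. -/
def ExtVanishingChain (C : ModuleCat.{u} R) : ℕ → ModuleCat.{u} R → ModuleCat.{u} R → Prop
  | 0, N, M => Nonempty (↥N ≃ₗ[R] ↥M)
  | k+1, N, M => ∃ (X K : ModuleCat.{u} R) (f : ↥K →ₗ[R] ↥X) (g : ↥X →ₗ[R] ↥M),
      Function.Injective f ∧ Function.Surjective g ∧
      LinearMap.ker g = LinearMap.range f ∧
      Module.Finite R ↥X ∧ (∀ i : ℕ, 0 < i → Subsingleton (ExtM R X C i)) ∧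
      ExtVanishingChain C k N K


section ExtComparison
variable {R}

theorem extMk_eq_zero_iff_zero {X Y : ModuleCat.{u} R} (P : ProjectiveResolution X)
    (f : P.complex.X 0 ⟶ Y) (hf : P.complex.d 1 0 ≫ f = 0) :
    P.extMk f 1 rfl hf = 0 ↔ f = 0 := by
  simp only [← P.extEquivCohomologyClass.apply_eq_iff_eq,
    ProjectiveResolution.extEquivCohomologyClass_extMk,
    ProjectiveResolution.extEquivCohomologyClass_zero,
    CochainComplex.HomComplex.CohomologyClass.mk_eq_zero_iff]
  rw [CochainComplex.HomComplex.Cocycle.toSingleMk_mem_coboundaries_iff _ _ _ _ _ 1 (by simp)]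
  constructor
  · rintro ⟨g, hg⟩
    have h0 : Limits.IsZero (P.cochainComplex.X 1) :=
      CochainComplex.isZero_of_isStrictlyLE _ 0 1 (by norm_num)
    rw [h0.eq_of_src g 0] at hg
    rw [← cancel_epi (P.cochainComplexXIso (-(0:ℕ)) 0 rfl).hom]
    simpa using hg.symm
  · rintro rfl
    exact ⟨0, by simp⟩

theorem extMk_smul {X Y : ModuleCat.{u} R} (P : ProjectiveResolution X) {n : ℕ}
    (f : P.complex.X n ⟶ Y) (hf : P.complex.d (n+1) n ≫ f = 0) (r : R) :
    P.extMk (r • f) (n+1) rfl (by rw [Linear.comp_smul, hf, smul_zero]) =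
      r • P.extMk f (n+1) rfl hf := by
  rw [Abelian.Ext.smul_eq_comp_mk₀, ProjectiveResolution.extMk_comp_mk₀]
  congr 1

theorem extM_equiv (X Y : ModuleCat.{u} R) (n : ℕ) :
    Nonempty (ExtM R X Y n ≃ₗ[R] Abelian.Ext X Y n) := by
  let P := projectiveResolution X
  let K := P.complex.linearYonedaObj R Y
  let S := K.sc n
  have e1 : ExtM R X Y n ≃ₗ[R] (LinearMap.ker S.g.hom ⧸ LinearMap.range S.moduleCatToCycles) :=
    ((P.isoExt n Y) ≪≫ S.moduleCatHomologyIso).toLinearEquiv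
  have hnext : (ComplexShape.up ℕ).next n = n + 1 := by simp
  have hg : ∀ f : P.complex.X n ⟶ Y, S.g.hom f = 0 ↔ P.complex.d (n+1) n ≫ f = 0 := by
    intro f
    change (K.d n ((ComplexShape.up ℕ).next n)).hom f = 0 ↔ _
    rw [hnext]
    rfl
  have hS : ∀ (f : P.complex.X n ⟶ Y) (h : P.complex.d (n+1) n ≫ f = 0),
      (∃ y, S.f.hom y = f) ↔ P.extMk f (n+1) rfl h = 0 := by
    intro f h
    have key : (∃ y, S.f.hom y = f) ↔
        ∃ y, (K.d ((ComplexShape.up ℕ).prev n) n).hom y = f := Iff.rfl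
    rw [key]
    rcases n with _ | p
    · refine Iff.trans ?_ (extMk_eq_zero_iff_zero P f h).symm
      rw [K.shape _ _ (by simp)]
      constructor
      · rintro ⟨y, hy⟩; rw [← hy]; rfl
      · rintro rfl; exact ⟨0, rfl⟩
    · refine Iff.trans ?_ (P.extMk_eq_zero_iff _ _ _ _ p rfl).symm
      have hprev : (ComplexShape.up ℕ).prev (p+1) = p := by simp
      rw [hprev]
      rfl
  let Φ : LinearMap.ker S.g.hom →ₗ[R] Abelian.Ext X Y n :=
    { toFun := fun f => P.extMk (f.1 : P.complex.X n ⟶ Y) (n+1) rfl ((hg f.1).1 f.2)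
      map_add' := fun f g => (P.add_extMk _ _ _ _ _ _).symm
      map_smul' := fun r f => extMk_smul P _ _ r }
  have hΦ : Function.Surjective Φ := by
    intro α
    obtain ⟨f, hf, rfl⟩ := P.extMk_surjective α (n+1) rfl
    exact ⟨⟨f, (hg f).2 hf⟩, rfl⟩
  have hker : LinearMap.range S.moduleCatToCycles = LinearMap.ker Φ := by
    ext ⟨f, hf⟩
    rw [LinearMap.mem_ker]
    change _ ↔ P.extMk (f : P.complex.X n ⟶ Y) (n+1) rfl ((hg f).1 hf) = 0
    have h1 : (⟨f, hf⟩ : LinearMap.ker S.g.hom) ∈ LinearMap.range S.moduleCatToCycles ↔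
        ∃ y, S.f.hom y = f := by
      constructor
      · rintro ⟨y, hy⟩; exact ⟨y, congrArg Subtype.val hy⟩
      · rintro ⟨y, hy⟩; exact ⟨y, Subtype.ext hy⟩
    rw [h1]
    exact hS f _
  exact ⟨e1.trans ((Submodule.quotEquivOfEq _ _ hker).trans (Φ.quotKerEquivOfSurjective hΦ))⟩
end ExtComparison

section ExtKit
variable {R}

/-- Vanishing of the `i`-th Ext of unbundled modules. -/
def Ez (R : Type u) [CommRing R] (X Y : Type u) [AddCommGroup X] [Module R X]
    [AddCommGroup Y] [Module R Y] (i : ℕ) : Prop :=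
  Subsingleton (Abelian.Ext (ModuleCat.of R X) (ModuleCat.of R Y) i)

theorem extM_iff_Ez (X Y : ModuleCat.{u} R) (i : ℕ) :
    Subsingleton (ExtM R X Y i) ↔ Ez R X Y i := by
  obtain ⟨e⟩ := extM_equiv X Y i
  exact e.toEquiv.subsingleton_congr

variable {A B D X Y : Type u} [AddCommGroup A] [Module R A] [AddCommGroup B] [Module R B]
  [AddCommGroup D] [Module R D] [AddCommGroup X] [Module R X] [AddCommGroup Y] [Module R Y]

/-- A short exact sequence of modules. -/
structure SES (f : A →ₗ[R] B) (g : B →ₗ[R] D) : Prop where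
  inj : Function.Injective f
  ex : Function.Exact f g
  surj : Function.Surjective g

/-- The short complex of a short exact sequence. -/
abbrev SES.sc {f : A →ₗ[R] B} {g : B →ₗ[R] D} (h : SES f g) : ShortComplex (ModuleCat.{u} R) :=
  ShortComplex.mk (ModuleCat.ofHom f) (ModuleCat.ofHom g) (by
    rw [← ModuleCat.ofHom_comp, h.ex.linearMap_comp_eq_zero]; rfl)

theorem SES.scE {f : A →ₗ[R] B} {g : B →ₗ[R] D} (h : SES f g) : h.sc.ShortExact where
  exact := (ShortComplex.ShortExact.moduleCat_exact_iff_function_exact _).2 h.ex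
  mono_f := (ModuleCat.mono_iff_injective _).2 h.inj
  epi_g := (ModuleCat.epi_iff_surjective _).2 h.surj

theorem Ez_iff {i : ℕ} :
    Ez R X Y i ↔ ∀ e : Abelian.Ext (ModuleCat.of R X) (ModuleCat.of R Y) i, e = 0 :=
  ⟨fun h e => @Subsingleton.elim _ h _ _, fun h => ⟨fun a b => by rw [h a, h b]⟩⟩

theorem Ez0 : Ez R X Y 0 ↔ Subsingleton (X →ₗ[R] Y) :=
  (Abelian.Ext.addEquiv₀.trans ModuleCat.homAddEquiv).toEquiv.subsingleton_congr

theorem Ez0' : Ez R X Y 0 ↔ ∀ f : X →ₗ[R] Y, f = 0 := by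
  rw [Ez0]
  exact ⟨fun h e => @Subsingleton.elim _ h _ _, fun h => ⟨fun a b => by rw [h a, h b]⟩⟩

theorem SES.cov2 {f : A →ₗ[R] B} {g : B →ₗ[R] D} (h : SES f g) {i : ℕ} (h1 : Ez R X A i)
    (h2 : Ez R X D i) : Ez R X B i := by
  rw [Ez_iff] at *
  intro e
  obtain ⟨x, rfl⟩ := Abelian.Ext.covariant_sequence_exact₂ (ModuleCat.of R X) h.scE e (h2 _)
  rw [h1 x]; simp

theorem SES.cov3 {f : A →ₗ[R] B} {g : B →ₗ[R] D} (h : SES f g) {i : ℕ} (h1 : Ez R X B i)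
    (h2 : Ez R X A (i+1)) : Ez R X D i := by
  rw [Ez_iff] at *
  intro e
  obtain ⟨x, rfl⟩ := Abelian.Ext.covariant_sequence_exact₃ (ModuleCat.of R X) h.scE e rfl (h2 _)
  rw [h1 x]; simp

theorem SES.cov1 {f : A →ₗ[R] B} {g : B →ₗ[R] D} (h : SES f g) {i : ℕ} (h1 : Ez R X D i)
    (h2 : Ez R X B (i+1)) : Ez R X A (i+1) := by
  rw [Ez_iff] at *
  intro e
  obtain ⟨x, rfl⟩ := Abelian.Ext.covariant_sequence_exact₁ (ModuleCat.of R X) h.scE e (h2 _) rfl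
  rw [h1 x]; simp

theorem Ez.cov0 (f : A →ₗ[R] B) (hf : Function.Injective f) (h1 : Ez R X B 0) :
    Ez R X A 0 := by
  rw [Ez0'] at *
  intro e
  ext x
  exact hf (by simpa using LinearMap.congr_fun (h1 (f ∘ₗ e)) x)

theorem Ez.con0 (g : B →ₗ[R] D) (hg : Function.Surjective g) (h1 : Ez R B Y 0) :
    Ez R D Y 0 := by
  rw [Ez0'] at *
  intro e
  ext x
  obtain ⟨y, rfl⟩ := hg x
  exact LinearMap.congr_fun (h1 (e ∘ₗ g)) y

theorem SES.con2 {f : A →ₗ[R] B} {g : B →ₗ[R] D} (h : SES f g) {i : ℕ} (h1 : Ez R A Y i)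
    (h2 : Ez R D Y i) : Ez R B Y i := by
  rw [Ez_iff] at *
  intro e
  obtain ⟨x, rfl⟩ := Abelian.Ext.contravariant_sequence_exact₂ h.scE (ModuleCat.of R Y) e (h1 _)
  rw [h2 x]; simp

theorem SES.con1 {f : A →ₗ[R] B} {g : B →ₗ[R] D} (h : SES f g) {i : ℕ} (h1 : Ez R B Y i)
    (h2 : Ez R D Y (i+1)) : Ez R A Y i := by
  rw [Ez_iff] at *
  intro e
  obtain ⟨x, rfl⟩ := Abelian.Ext.contravariant_sequence_exact₁ h.scE (ModuleCat.of R Y) e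
    (add_comm _ _) (h2 _)
  rw [h1 x]; simp

theorem SES.con3 {f : A →ₗ[R] B} {g : B →ₗ[R] D} (h : SES f g) {i : ℕ} (h1 : Ez R A Y i)
    (h2 : Ez R B Y (i+1)) : Ez R D Y (i+1) := by
  rw [Ez_iff] at *
  intro e
  obtain ⟨x, rfl⟩ := Abelian.Ext.contravariant_sequence_exact₃ h.scE (ModuleCat.of R Y) e (h2 _)
    (add_comm _ _)
  rw [h1 x]; simp

theorem ext0_mk (e : Abelian.Ext (ModuleCat.of R X) (ModuleCat.of R Y) 0) :
    ∃ φ : X →ₗ[R] Y, e = Abelian.Ext.mk₀ (ModuleCat.ofHom φ) := by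
  obtain ⟨φ, rfl⟩ := Abelian.Ext.mk₀_bijective _ _ |>.2 e
  exact ⟨φ.hom, rfl⟩

theorem mk₀_inj {φ ψ : X →ₗ[R] Y} (h : Abelian.Ext.mk₀ (ModuleCat.ofHom φ) =
    Abelian.Ext.mk₀ (ModuleCat.ofHom ψ)) : φ = ψ := by
  have := (Abelian.Ext.mk₀_bijective _ _).1 h
  exact congrArg ModuleCat.Hom.hom this

theorem SES.con1' {f : A →ₗ[R] B} {g : B →ₗ[R] D} (h : SES f g) (h2 : Ez R D Y 1)
    (φ : A →ₗ[R] Y) : ∃ ψ : B →ₗ[R] Y, ψ ∘ₗ f = φ := by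
  rw [Ez_iff] at h2
  obtain ⟨x, hx⟩ := Abelian.Ext.contravariant_sequence_exact₁ h.scE (ModuleCat.of R Y)
    (Abelian.Ext.mk₀ (ModuleCat.ofHom φ)) (add_comm _ _) (h2 _)
  obtain ⟨ψ, rfl⟩ := Abelian.Ext.mk₀_bijective _ _ |>.2 x
  refine ⟨ψ.hom, ?_⟩
  rw [Abelian.Ext.mk₀_comp_mk₀] at hx
  have := (Abelian.Ext.mk₀_bijective _ _).1 hx
  exact congrArg ModuleCat.Hom.hom this

theorem SES.con3' {f : A →ₗ[R] B} {g : B →ₗ[R] D} (h : SES f g)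
    (h1 : ∀ φ : A →ₗ[R] Y, ∃ ψ : B →ₗ[R] Y, ψ ∘ₗ f = φ)
    (h2 : Ez R B Y 1) : Ez R D Y 1 := by
  rw [Ez_iff] at *
  intro e
  obtain ⟨x, rfl⟩ := Abelian.Ext.contravariant_sequence_exact₃ h.scE (ModuleCat.of R Y) e (h2 _)
    (add_comm 1 0)
  obtain ⟨φ, rfl⟩ := Abelian.Ext.mk₀_bijective _ _ |>.2 x
  obtain ⟨ψ, hψ⟩ := h1 φ.hom
  have : φ = h.sc.f ≫ ModuleCat.ofHom ψ := by
    apply ModuleCat.hom_ext; exact hψ.symm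
  rw [this, ← Abelian.Ext.mk₀_comp_mk₀, ShortComplex.ShortExact.extClass_comp_assoc]

theorem SES.cov1' {f : A →ₗ[R] B} {g : B →ₗ[R] D} (h : SES f g) (h2 : Ez R X A 1)
    (φ : X →ₗ[R] D) : ∃ ψ : X →ₗ[R] B, g ∘ₗ ψ = φ := by
  rw [Ez_iff] at h2
  obtain ⟨x, hx⟩ := Abelian.Ext.covariant_sequence_exact₃ (ModuleCat.of R X) h.scE
    (Abelian.Ext.mk₀ (ModuleCat.ofHom φ)) rfl (h2 _)
  obtain ⟨ψ, rfl⟩ := Abelian.Ext.mk₀_bijective _ _ |>.2 x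
  refine ⟨ψ.hom, ?_⟩
  rw [Abelian.Ext.mk₀_comp_mk₀] at hx
  have := (Abelian.Ext.mk₀_bijective _ _).1 hx
  exact congrArg ModuleCat.Hom.hom this

theorem SES.of_equiv_left (e : A ≃ₗ[R] B) :
    SES (e : A →ₗ[R] B) (0 : B →ₗ[R] PUnit.{u+1}) where
  inj := e.injective
  ex := fun y => ⟨fun _ => e.surjective y, fun _ => rfl⟩
  surj := fun y => ⟨0, rfl⟩

theorem SES.of_equiv_right (e : A ≃ₗ[R] B) :
    SES (0 : PUnit.{u+1} →ₗ[R] A) (e : A →ₗ[R] B) where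
  inj := fun _ _ _ => rfl
  ex := fun y => ⟨fun h => ⟨0, (e.injective (by simpa using h)).symm⟩, by
    rintro ⟨x, rfl⟩; simp⟩
  surj := e.surjective

theorem Ez_punit_left (i : ℕ) : Ez R PUnit.{u+1} Y i := by
  rcases i with _ | i
  · rw [Ez0]; exact ⟨fun a b => by ext x; rw [Subsingleton.elim x 0, map_zero, map_zero]⟩
  · exact Abelian.Ext.subsingleton_of_projective _ _ _

theorem Ez_punit_right (i : ℕ) : Ez R X PUnit.{u+1} i := by
  rw [Ez_iff]
  intro e
  have h : (𝟙 (ModuleCat.of R PUnit.{u+1})) = 0 := by ext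
  rw [← e.comp_mk₀_id, h]; simp

theorem Ez.congr_left (e : A ≃ₗ[R] B) {i : ℕ} (h : Ez R A Y i) : Ez R B Y i :=
  (SES.of_equiv_left e).con2 h (Ez_punit_left i)

theorem Ez.congr_right (e : A ≃ₗ[R] B) {i : ℕ} (h : Ez R X A i) : Ez R X B i :=
  (SES.of_equiv_left e).cov2 h (Ez_punit_right i)

theorem Ez_proj [Module.Projective R X] (i : ℕ) : Ez R X Y (i+1) := by
  have : Projective (ModuleCat.of R X) := (IsProjective.iff_projective X).1 inferInstance
  exact Abelian.Ext.subsingleton_of_projective _ _ _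

theorem Ez_proj' [Module.Projective R X] {i : ℕ} (hi : 0 < i) : Ez R X Y i := by
  obtain ⟨j, rfl⟩ := Nat.exists_eq_succ_of_ne_zero hi.ne'
  exact Ez_proj j

theorem SES.shift {f : A →ₗ[R] B} {g : B →ₗ[R] D} (h : SES f g) {i : ℕ} (h1 : Ez R B Y i)
    (h2 : Ez R B Y (i+1)) :
    Nonempty (Abelian.Ext (ModuleCat.of R A) (ModuleCat.of R Y) i ≃ₗ[R]
      Abelian.Ext (ModuleCat.of R D) (ModuleCat.of R Y) (i+1)) := by
  rw [Ez_iff] at h1 h2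
  let Φ : Abelian.Ext (ModuleCat.of R A) (ModuleCat.of R Y) i →ₗ[R]
      Abelian.Ext (ModuleCat.of R D) (ModuleCat.of R Y) (i+1) :=
    { toFun := fun x => h.scE.extClass.comp x (add_comm _ _)
      map_add' := fun x y => by simp
      map_smul' := fun r x => by simp }
  refine ⟨LinearEquiv.ofBijective Φ ⟨?_, ?_⟩⟩
  · rw [injective_iff_map_eq_zero]
    intro x hx
    obtain ⟨y, rfl⟩ := Abelian.Ext.contravariant_sequence_exact₁ h.scE (ModuleCat.of R Y) x
      (add_comm _ _) hx
    rw [h1 y]; simp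
  · intro e
    obtain ⟨x, rfl⟩ := Abelian.Ext.contravariant_sequence_exact₃ h.scE (ModuleCat.of R Y) e
      (h2 _) (add_comm _ _)
    exact ⟨x, rfl⟩

theorem SES.shift0 {f : A →ₗ[R] B} {g : B →ₗ[R] D} (h : SES f g) (h2 : Ez R B Y 1) :
    Nonempty (((A →ₗ[R] Y) ⧸ LinearMap.range (LinearMap.lcomp R Y f)) ≃ₗ[R]
      Abelian.Ext (ModuleCat.of R D) (ModuleCat.of R Y) 1) := by
  rw [Ez_iff] at h2
  let Φ : (A →ₗ[R] Y) →ₗ[R] Abelian.Ext (ModuleCat.of R D) (ModuleCat.of R Y) 1 :=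
    { toFun := fun x => h.scE.extClass.comp (Abelian.Ext.mk₀ (ModuleCat.ofHom x)) (add_zero _)
      map_add' := fun x y => by simp [ModuleCat.ofHom_add, Abelian.Ext.mk₀_add]
      map_smul' := fun r x => by
        have : ModuleCat.ofHom (r • x) = r • ModuleCat.ofHom x := rfl
        simp [this, Abelian.Ext.mk₀_smul] }
  have hs : Function.Surjective Φ := by
    intro e
    obtain ⟨x, rfl⟩ := Abelian.Ext.contravariant_sequence_exact₃ h.scE (ModuleCat.of R Y) e
      (h2 _) (add_comm 1 0)
    obtain ⟨φ, rfl⟩ := Abelian.Ext.mk₀_bijective _ _ |>.2 x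
    exact ⟨φ.hom, rfl⟩
  have hk : LinearMap.range (LinearMap.lcomp R Y f) = LinearMap.ker Φ := by
    ext φ
    constructor
    · rintro ⟨ψ, rfl⟩
      change h.scE.extClass.comp (Abelian.Ext.mk₀ (h.sc.f ≫ ModuleCat.ofHom ψ)) (add_zero _) = 0
      rw [← Abelian.Ext.mk₀_comp_mk₀, ShortComplex.ShortExact.extClass_comp_assoc]
    · intro hφ
      obtain ⟨x, hx⟩ := Abelian.Ext.contravariant_sequence_exact₁ h.scE (ModuleCat.of R Y)
        (Abelian.Ext.mk₀ (ModuleCat.ofHom φ)) (add_comm 1 0) hφ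
      obtain ⟨ψ, rfl⟩ := Abelian.Ext.mk₀_bijective _ _ |>.2 x
      refine ⟨ψ.hom, ?_⟩
      rw [Abelian.Ext.mk₀_comp_mk₀] at hx
      have := (Abelian.Ext.mk₀_bijective _ _).1 hx
      exact congrArg ModuleCat.Hom.hom this
  exact ⟨(Submodule.quotEquivOfEq _ _ hk).trans (Φ.quotKerEquivOfSurjective hs)⟩

theorem ext_smul_zero {r : R} (hr : r ∈ Module.annihilator R X) {i : ℕ}
    (e : Abelian.Ext (ModuleCat.of R X) (ModuleCat.of R Y) i) : r • e = 0 := by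
  have := Abelian.Ext.postcomp_smul_id_eq_zero_of_mem_annihilator (M := ModuleCat.of R Y)
    (N := ModuleCat.of R X) hr i
  have h2 := congrArg (fun t => t.hom e) this
  rw [Abelian.Ext.smul_eq_comp_mk₀]
  exact h2

/-- If `f` is a combination of maps with coefficients annihilating `X`, and the connecting
source vanishes, then `Ext(X, A)` vanishes. -/
theorem SES.cov_min {f : A →ₗ[R] B} {g : B →ₗ[R] D} (h : SES f g) {i : ℕ}
    (hD : ∀ j, j + 1 = i → Ez R X D j) {ι : Type*} (s : Finset ι) (r : ι → R)
    (φ : ι → (A →ₗ[R] B)) (hr : ∀ j ∈ s, r j ∈ Module.annihilator R X)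
    (hf : f = ∑ j ∈ s, r j • φ j) : Ez R X A i := by
  rw [Ez_iff]
  intro e
  have hz : e.comp (Abelian.Ext.mk₀ (ModuleCat.ofHom f)) (add_zero i) = 0 := by
    have h1 : (ModuleCat.ofHom f : ModuleCat.of R A ⟶ ModuleCat.of R B) =
        ∑ j ∈ s, r j • ModuleCat.ofHom (φ j) := by
      apply ModuleCat.hom_ext
      rw [ModuleCat.hom_sum]
      exact hf
    have h3 : Abelian.Ext.mk₀ (∑ j ∈ s, r j • (ModuleCat.ofHom (φ j) : ModuleCat.of R A ⟶ ModuleCat.of R B)) =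
        ∑ j ∈ s, r j • Abelian.Ext.mk₀ (ModuleCat.ofHom (φ j)) := by
      have := map_sum (Abelian.Ext.addEquiv₀ (X := ModuleCat.of R A) (Y := ModuleCat.of R B)).symm
        (fun j => r j • (ModuleCat.ofHom (φ j) : ModuleCat.of R A ⟶ ModuleCat.of R B)) s
      refine this.trans (Finset.sum_congr rfl fun j _ => ?_)
      exact Abelian.Ext.mk₀_smul _ _
    rw [h1, h3]
    have h4 := map_sum (Abelian.Ext.bilinearComp (ModuleCat.of R X) (ModuleCat.of R A)
      (ModuleCat.of R B) i 0 i (add_zero i) e)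
        (fun j => r j • Abelian.Ext.mk₀ (ModuleCat.ofHom (φ j))) s
    refine h4.trans (Finset.sum_eq_zero fun j hj => ?_)
    change e.comp (r j • Abelian.Ext.mk₀ (ModuleCat.ofHom (φ j))) (add_zero i) = 0
    rw [Abelian.Ext.comp_smul]
    exact ext_smul_zero (hr j hj) _
  rcases i with _ | i
  · obtain ⟨φ, rfl⟩ := ext0_mk e
    rw [Abelian.Ext.mk₀_comp_mk₀] at hz
    have h0 : f ∘ₗ φ = 0 := by
      apply mk₀_inj
      rw [ModuleCat.ofHom_comp, hz]
      exact (Abelian.Ext.mk₀_zero _ _).symm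
    have : φ = 0 := by
      ext x; exact h.inj (by simpa using LinearMap.congr_fun h0 x)
    rw [this]; exact Abelian.Ext.mk₀_zero _ _
  · obtain ⟨x, rfl⟩ := Abelian.Ext.covariant_sequence_exact₁ (ModuleCat.of R X) h.scE e hz rfl
    have := Ez_iff.1 (hD i rfl) x
    rw [this]; simp

end ExtKit

section DepthKit
open scoped Pointwise
variable {R}
variable {A B D X Y : Type u} [AddCommGroup A] [Module R A] [AddCommGroup B] [Module R B]
  [AddCommGroup D] [Module R D] [AddCommGroup X] [Module R X] [AddCommGroup Y] [Module R Y]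

theorem SES.smul {x : R} (hx : IsSMulRegular A x) :
    SES (LinearMap.lsmul R A x) (Submodule.mkQ (x • (⊤ : Submodule R A))) where
  inj := hx
  ex := by
    intro y
    rw [Submodule.mkQ_apply, Submodule.Quotient.mk_eq_zero, Submodule.mem_smul_pointwise_iff_exists]
    simp
  surj := Submodule.mkQ_surjective _

theorem regular_hom {x : R} (hx : IsSMulRegular A x) : IsSMulRegular (X →ₗ[R] A) x := by
  intro f g h
  ext y
  exact hx (LinearMap.congr_fun h y)

/-- Dimension inequality for the support. -/
theorem supportDim_add_le [IsNoetherianRing R] [IsLocalRing R] (n : ℕ)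
    [Module.Finite R X] [Nontrivial X] : ∀ (A : Type u) [AddCommGroup A] [Module R A]
    [Module.Finite R A], Module.support R X ⊆ Module.support R A →
    (∀ i < n, Ez R X A i) → Module.supportDim R X + n ≤ Module.supportDim R A := by
  induction n with
  | zero =>
    intro A _ _ _ hs _
    have : Module.supportDim R X ≤ Module.supportDim R A :=
      Order.krullDim_le_of_strictMono (fun a ↦ ⟨a.1, hs a.2⟩) (fun {_ _} lt ↦ lt)
    simpa using this
  | succ n ih =>
    intro A _ _ _ hs hE
    obtain ⟨x, hxann, hx⟩ := IsSMulRegular.subsingleton_linearMap_iff.1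
      (Ez0.1 (hE 0 n.succ_pos))
    have hxm : x ∈ IsLocalRing.maximalIdeal R := by
      by_contra hc
      have hu : IsUnit x := by simpa using hc
      obtain ⟨y, hy⟩ := exists_ne (0 : X)
      exact hy ((hu.smul_eq_zero).1 (Module.mem_annihilator.1 hxann y))
    have h1 := Module.supportDim_quotSMulTop_succ_eq_supportDim hx hxm
    rw [← h1]
    have h2 := ih (QuotSMulTop x A) (by
      rw [Module.support_quotSMulTop]
      refine Set.subset_inter hs ?_
      rw [Module.support_eq_zeroLocus]
      exact PrimeSpectrum.zeroLocus_anti_mono (by simpa using hxann))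
      (fun i hi => (SES.smul hx).cov3 (hE i (by omega)) (hE (i+1) (by omega)))
    push_cast
    rw [← add_assoc]
    gcongr

variable [IsLocalRing R]

/-- Depth at least `s`. -/
def DG (R : Type u) [CommRing R] [IsLocalRing R] (s : ℕ) (A : Type u) [AddCommGroup A]
    [Module R A] : Prop := ∀ i < s, Ez R (IsLocalRing.ResidueField R) A i

/-- Unbundled depth. -/
def dp (R : Type u) [CommRing R] [IsLocalRing R] (A : Type u) [AddCommGroup A]
    [Module R A] : ℕ∞ := rdepth R (ModuleCat.of R A)

theorem le_dp {s : ℕ} : (s : ℕ∞) ≤ dp R A ↔ DG R s A := by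
  unfold dp rdepth DG
  rw [le_sInf_iff]
  constructor
  · intro h i hi
    by_contra hc
    have := h i ⟨i, fun h' => hc ((extM_iff_Ez _ _ _).1 h'), rfl⟩
    exact absurd (by exact_mod_cast this) (not_le.2 hi)
  · rintro h _ ⟨i, hi, rfl⟩
    by_contra hc
    exact hi ((extM_iff_Ez _ _ _).2 (h i (by simpa using hc)))

theorem DG.mono {s s' : ℕ} (h : DG R s A) (hs : s' ≤ s) : DG R s' A :=
  fun i hi => h i (by omega)

theorem DG.congr (e : A ≃ₗ[R] B) {s : ℕ} (h : DG R s A) : DG R s B :=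
  fun i hi => (h i hi).congr_right e

theorem dp_eq_iff {d : ℕ} : dp R A = d ↔ DG R d A ∧ ¬ DG R (d+1) A := by
  rw [← le_dp, ← le_dp]
  constructor
  · intro h; rw [h]; exact ⟨le_rfl, by norm_cast; omega⟩
  · rintro ⟨h1, h2⟩
    refine le_antisymm ?_ h1
    push_cast at h2
    exact Order.le_of_lt_add_one (not_le.1 h2)

theorem enat_ext {a b : ℕ∞} (h : ∀ s : ℕ, (s : ℕ∞) ≤ a ↔ (s : ℕ∞) ≤ b) : a = b :=
  le_antisymm (ENat.forall_natCast_le_iff_le.1 fun s hs => (h s).1 hs)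
    (ENat.forall_natCast_le_iff_le.1 fun s hs => (h s).2 hs)

theorem dp_congr (e : A ≃ₗ[R] B) : dp R A = dp R B :=
  enat_ext fun _ => by rw [le_dp, le_dp]; exact ⟨.congr e, .congr e.symm⟩

theorem SES.dg1 {f : A →ₗ[R] B} {g : B →ₗ[R] D} (h : SES f g) {s : ℕ} (h1 : DG R s D)
    (h2 : DG R (s+1) B) : DG R (s+1) A := by
  intro i hi
  rcases i with _ | i
  · exact (h2 0 hi).cov0 f h.inj
  · exact h.cov1 (h1 i (by omega)) (h2 _ hi)

theorem SES.dg3 {f : A →ₗ[R] B} {g : B →ₗ[R] D} (h : SES f g) {s : ℕ} (h1 : DG R (s+1) A)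
    (h2 : DG R s B) : DG R s D := 
  fun i hi => h.cov3 (h2 i hi) (h1 (i+1) (by omega))

theorem SES.dp_shift {f : A →ₗ[R] B} {g : B →ₗ[R] D} (h : SES f g) {t : ℕ} (h1 : DG R t B)
    (h2 : ¬ DG R t D) : dp R A = dp R D + 1 := by
  have h3 : dp R D < t := not_le.1 (fun h => h2 (le_dp.1 h))
  obtain ⟨d, hd⟩ := ENat.ne_top_iff_exists.1 (ne_top_of_lt h3)
  rw [← hd] at h3 ⊢
  have h4 : d < t := by exact_mod_cast h3
  obtain ⟨h5, h6⟩ := dp_eq_iff.1 hd.symm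
  have := (dp_eq_iff (R := R) (A := A) (d := d+1)).2 ⟨h.dg1 h5 (h1.mono h4), fun h7 =>
    h6 (h.dg3 h7 (h1.mono h4))⟩
  rw [this]; simp

theorem SES.dp_shift_lt {f : A →ₗ[R] B} {g : B →ₗ[R] D} (h : SES f g) {t : ℕ} (h1 : DG R t B)
    (h2 : ¬ DG R t A) : ¬ DG R t D := fun h3 => by
  rcases t with _ | t
  · exact h2 (fun i hi => absurd hi (by omega))
  · exact h2 (h.dg1 (h3.mono (Nat.le_succ t)) h1)

theorem ann_k : Module.annihilator R (IsLocalRing.ResidueField R) = IsLocalRing.maximalIdeal R :=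
  Ideal.annihilator_quotient

theorem DG_pi {ι : Type} [Finite ι] {s : ℕ} (h : DG R s A) : DG R s (ι → A) := by
  have key : ∀ n : ℕ, DG R s (Fin n → A) := by
    intro n
    induction n with
    | zero =>
      intro i _
      refine (Ez_punit_right i).congr_right (A := PUnit.{u+1}) ?_
      exact (LinearEquiv.ofSubsingleton _ _)
    | succ n ih =>
      have e : (A × (Fin n → A)) ≃ₗ[R] (Fin (n+1) → A) := Fin.consLinearEquiv R (fun _ => A)
      refine DG.congr e ?_
      have hS : SES (LinearMap.inl R A (Fin n → A)) (LinearMap.snd R A (Fin n → A)) :=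
        ⟨LinearMap.inl_injective, Function.Exact.inl_snd, LinearMap.snd_surjective⟩
      exact fun i hi => hS.cov2 (h i hi) (ih i hi)
  obtain ⟨n, ⟨e⟩⟩ := Finite.exists_equiv_fin ι
  exact (key n).congr (LinearEquiv.funCongrLeft R A e)

theorem DG_retract {s : ℕ} (i : A →ₗ[R] B) (p : B →ₗ[R] A) (h : p ∘ₗ i = LinearMap.id)
    (hB : DG R s B) : DG R s A := by
  intro j hj
  rw [Ez_iff]
  intro e
  have h0 := Ez_iff.1 (hB j hj) (e.comp (Abelian.Ext.mk₀ (ModuleCat.ofHom i)) (add_zero j))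
  have h2 : (ModuleCat.ofHom i ≫ ModuleCat.ofHom p : ModuleCat.of R A ⟶ ModuleCat.of R A) = 𝟙 _ := by
    rw [← ModuleCat.ofHom_comp, h]; rfl
  have h1 := congrArg (fun t => Abelian.Ext.comp t (Abelian.Ext.mk₀ (ModuleCat.ofHom p)) (add_zero j)) h0
  simpa [h2] using h1

/-- depth is at most the dimension of the support. -/
theorem dp_le_supportDim [IsNoetherianRing R] [Module.Finite R A] [Nontrivial A] {s : ℕ}
    (h : DG R s A) : (s : WithBot ℕ∞) ≤ Module.supportDim R A := by
  have h1 := supportDim_add_le (R := R) (X := IsLocalRing.ResidueField R) s A (by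
    rw [Module.support_eq_zeroLocus, ann_k]
    intro p hp
    have : p = IsLocalRing.closedPoint R := by
      apply PrimeSpectrum.ext
      exact ((IsLocalRing.maximalIdeal.isMaximal R).eq_of_le p.2.ne_top hp).symm
    rw [this]
    exact IsLocalRing.closedPoint_mem_support R A) h
  refine le_trans ?_ h1
  have : (0 : WithBot ℕ∞) ≤ Module.supportDim R (IsLocalRing.ResidueField R) := by
    rw [Module.supportDim_eq_ringKrullDim_quotient_annihilator, ann_k]
    exact ringKrullDim_nonneg_of_nontrivial
  calc (s : WithBot ℕ∞) = 0 + s := (zero_add _).symm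
    _ ≤ _ := by gcongr

theorem not_DG_of_dim [IsNoetherianRing R] [Module.Finite R A] [Nontrivial A] {t : ℕ}
    (ht : ringKrullDim R = t) : ¬ DG R (t+1) A := by
  intro h
  have := (dp_le_supportDim h).trans (Module.supportDim_le_ringKrullDim R A)
  rw [ht] at this
  have : t + 1 ≤ t := by exact_mod_cast this
  omega

end DepthKit

section HomDepth
open scoped Pointwise
variable {R} 
variable {A B D X Y : Type u} [AddCommGroup A] [Module R A] [AddCommGroup B] [Module R B]
  [AddCommGroup D] [Module R D] [AddCommGroup X] [Module R X] [AddCommGroup Y] [Module R Y]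

theorem subsingleton_of_hom_faithful [IsNoetherianRing R] [Module.Finite R X] [Module.Finite R Y]
    (hX : Module.annihilator R X = ⊥) (h : ∀ f : X →ₗ[R] Y, f = 0) : Subsingleton Y := by
  obtain ⟨r, hr, hreg⟩ := IsSMulRegular.subsingleton_linearMap_iff.1
    (⟨fun a b => by rw [h a, h b]⟩ : Subsingleton (X →ₗ[R] Y))
  rw [hX, Ideal.mem_bot] at hr
  subst hr
  exact ⟨fun a b => hreg (by simp)⟩

theorem SES.hom_right {f : A →ₗ[R] B} {g : B →ₗ[R] D} (h : SES f g) (hE : Ez R X A 1) :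
    SES (LinearMap.compRight R f : (X →ₗ[R] A) →ₗ[R] _) (LinearMap.compRight R g) where
  inj := fun a b hab => by
    ext x; exact h.inj (LinearMap.congr_fun hab x)
  ex := by
    intro φ
    constructor
    · intro hφ
      have : ∀ x, φ x ∈ LinearMap.range f := fun x =>
        (h.ex (φ x)).1 (LinearMap.congr_fun hφ x)
      refine ⟨(LinearEquiv.ofInjective f h.inj).symm ∘ₗ φ.codRestrict _ this, ?_⟩
      ext x
      exact congrArg Subtype.val ((LinearEquiv.ofInjective f h.inj).apply_symm_apply
        (φ.codRestrict _ this x))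
    · rintro ⟨ψ, rfl⟩
      ext x
      exact (h.ex _).2 ⟨_, rfl⟩
  surj := fun φ => by
    obtain ⟨ψ, hψ⟩ := h.cov1' hE φ
    exact ⟨ψ, hψ⟩

theorem SES.hom_left {f : A →ₗ[R] B} {g : B →ₗ[R] D} (h : SES f g) (hE : Ez R D Y 1) :
    SES (LinearMap.lcomp R Y g) (LinearMap.lcomp R Y f) where
  inj := fun a b hab => by
    ext x
    obtain ⟨x, rfl⟩ := h.surj x
    exact LinearMap.congr_fun hab x
  ex := by
    intro φ
    constructor
    · intro hφ
      have hle : LinearMap.ker g ≤ LinearMap.ker φ := by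
        intro x hx
        obtain ⟨y, rfl⟩ := (h.ex x).1 hx
        exact LinearMap.congr_fun hφ y
      refine ⟨(LinearMap.ker g).liftQ φ hle ∘ₗ (g.quotKerEquivOfSurjective h.surj).symm, ?_⟩
      ext x
      have : (g.quotKerEquivOfSurjective h.surj).symm (g x) = Submodule.Quotient.mk x := by
        rw [LinearEquiv.symm_apply_eq]; rfl
      simp [this]
    · rintro ⟨ψ, rfl⟩
      ext x
      have : g (f x) = 0 := (h.ex _).2 ⟨_, rfl⟩
      simp [this]
  surj := fun φ => by
    obtain ⟨ψ, hψ⟩ := h.con1' hE φ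
    exact ⟨ψ, hψ⟩

variable [IsLocalRing R] 

theorem SES.dg_smul {x : R} (hxm : x ∈ IsLocalRing.maximalIdeal R) {f : A →ₗ[R] A}
    {g : A →ₗ[R] D} (h : SES f g) (hf : f = LinearMap.lsmul R A x) {s : ℕ} (hD : DG R s D) :
    DG R (s+1) A := by
  intro i hi
  refine h.cov_min (fun j hj => hD j (by omega)) ({0} : Finset ℕ) (fun _ => x)
    (fun _ => LinearMap.id) (fun _ _ => by rwa [ann_k]) ?_
  rw [hf]; ext; simp

theorem DG.exists_regular [IsNoetherianRing R] [Module.Finite R A] {s : ℕ}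
    (h : DG R (s+1) A) :
    ∃ x ∈ IsLocalRing.maximalIdeal R, IsSMulRegular A x := by
  have := IsSMulRegular.subsingleton_linearMap_iff.1 (Ez0.1 (h 0 s.succ_pos))
  rwa [ann_k] at this

theorem compRight_lsmul (x : R) : (LinearMap.compRight R (LinearMap.lsmul R A x) :
    (X →ₗ[R] A) →ₗ[R] _) = LinearMap.lsmul R (X →ₗ[R] A) x := by
  ext f y; simp

theorem DG_of_hom [IsNoetherianRing R] [Module.Finite R X]
    (hX : Module.annihilator R X = ⊥) (s : ℕ) : ∀ (A : Type u) [AddCommGroup A] [Module R A]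
    [Module.Finite R A], (∀ i, 0 < i → Ez R X A i) → DG R s (X →ₗ[R] A) → DG R s A := by
  induction s with
  | zero => intro A _ _ _ _ _ i hi; omega
  | succ s ih =>
    intro A _ _ _ hE hD
    obtain ⟨x, hxm, hx⟩ := hD.exists_regular
    have hxA : IsSMulRegular A x := by
      have hs : Subsingleton (LinearMap.ker (LinearMap.lsmul R A x)) := by
        apply subsingleton_of_hom_faithful hX
        intro f
        have : (Submodule.subtype _ ∘ₗ f : X →ₗ[R] A) = 0 := by
          apply hx
          ext y
          have h5 : LinearMap.lsmul R A x (f y) = 0 := LinearMap.mem_ker.1 (f y).2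
          change x • ((f y : A)) = x • (0 : A)
          rw [smul_zero]; exact h5
        ext y
        exact LinearMap.congr_fun this y
      have h2 : LinearMap.ker (LinearMap.lsmul R A x) = ⊥ :=
        Submodule.subsingleton_iff_eq_bot.1 hs
      exact LinearMap.ker_eq_bot.1 h2
    have hS := SES.smul hxA
    have hH := hS.hom_right (X := X) (hE 1 one_pos)
    have h3 := ih (QuotSMulTop x A) (fun i hi => hS.cov3 (hE i hi) (hE (i+1) (by omega)))
      (hH.dg3 hD (hD.mono (by omega)))
    exact hS.dg_smul hxm rfl h3

theorem DG_hom [IsNoetherianRing R] [Module.Finite R X] (s : ℕ) :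
    ∀ (A : Type u) [AddCommGroup A] [Module R A]
    [Module.Finite R A], (∀ i, 0 < i → Ez R X A i) → DG R s A → DG R s (X →ₗ[R] A) := by
  induction s with
  | zero => intro A _ _ _ _ _ i hi; omega
  | succ s ih =>
    intro A _ _ _ hE hD
    obtain ⟨x, hxm, hxA⟩ := hD.exists_regular
    have hS := SES.smul hxA
    have hH := hS.hom_right (X := X) (hE 1 one_pos)
    have h3 := ih (QuotSMulTop x A) (fun i hi => hS.cov3 (hE i hi) (hE (i+1) (by omega)))
      (hS.dg3 hD (hD.mono (by omega)))
    exact hH.dg_smul hxm (compRight_lsmul x) h3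

end HomDepth

/-- Unbundled semidualizing modules. -/
structure SD (R : Type u) [CommRing R] (C : Type u) [AddCommGroup C] [Module R C] : Prop where
  fin : Module.Finite R C
  bij : Function.Bijective (LinearMap.lsmul R C)
  ext : ∀ i, 0 < i → Ez R C C i

theorem IsSemidualizing.sd {R : Type u} [CommRing R] {C : ModuleCat.{u} R}
    (h : IsSemidualizing R C) : SD R C where
  fin := h.1
  bij := h.2.1
  ext := fun i hi => (extM_iff_Ez _ _ _).1 (h.2.2 i hi)

section SDkit
variable {R}
variable {C : Type u} [AddCommGroup C] [Module R C]

theorem SD.ann (h : SD R C) : Module.annihilator R C = ⊥ := by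
  rw [eq_bot_iff]
  intro r hr
  have : LinearMap.lsmul R C r = LinearMap.lsmul R C 0 := by
    ext c; simpa using Module.mem_annihilator.1 hr c
  exact h.bij.1 this

theorem SD.dg [IsLocalRing R] [IsNoetherianRing R] (h : SD R C) {s : ℕ} (hs : DG R s R) :
    DG R s C := by
  have := h.fin
  exact DG_of_hom h.ann s C h.ext (hs.congr (LinearEquiv.ofBijective (LinearMap.lsmul R C) h.bij))

theorem SD.nontrivial [Nontrivial R] (h : SD R C) : Nontrivial C := by
  by_contra hc
  rw [not_nontrivial_iff_subsingleton] at hc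
  exact one_ne_zero (α := R) (h.bij.1 (Subsingleton.elim _ _))
end SDkit

section ACKit
variable {R} 
variable {A B D A' B' D' N C : Type u} [AddCommGroup A] [Module R A] [AddCommGroup B] [Module R B]
  [AddCommGroup D] [Module R D] [AddCommGroup A'] [Module R A'] [AddCommGroup B'] [Module R B']
  [AddCommGroup D'] [Module R D'] [AddCommGroup N] [Module R N] [AddCommGroup C] [Module R C]

theorem SES.bij_mid {f : A →ₗ[R] B} {g : B →ₗ[R] D} (h : SES f g)
    {f' : A' →ₗ[R] B'} {g' : B' →ₗ[R] D'} (h' : SES f' g')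
    {a : A →ₗ[R] A'} {b : B →ₗ[R] B'} {d : D →ₗ[R] D'}
    (c1 : ∀ x, b (f x) = f' (a x)) (c2 : ∀ x, d (g x) = g' (b x))
    (ha : Function.Bijective a) (hd : Function.Bijective d) : Function.Bijective b := by
  constructor
  · rw [injective_iff_map_eq_zero]
    intro x hx
    have h1 : g x = 0 := hd.1 (by rw [c2, hx, map_zero, map_zero])
    obtain ⟨y, rfl⟩ := (h.ex x).1 h1
    have : a y = 0 := h'.inj (by rw [← c1, hx, map_zero])
    rw [ha.1 (this.trans (map_zero a).symm), map_zero]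
  · intro y
    obtain ⟨z, hz⟩ := hd.2 (g' y)
    obtain ⟨x, rfl⟩ := h.surj z
    have : g' (y - b x) = 0 := by rw [map_sub, ← c2, hz, sub_self]
    obtain ⟨w, hw⟩ := (h'.ex _).1 this
    obtain ⟨v, rfl⟩ := ha.2 w
    exact ⟨f v + x, by rw [map_add, c1, hw, sub_add_cancel]⟩

theorem SES.bij_right {f : A →ₗ[R] B} {g : B →ₗ[R] D} (h : SES f g)
    {f' : A' →ₗ[R] B'} {g' : B' →ₗ[R] D'} (h' : SES f' g')
    {a : A →ₗ[R] A'} {b : B →ₗ[R] B'} {d : D →ₗ[R] D'}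
    (c1 : ∀ x, b (f x) = f' (a x)) (c2 : ∀ x, d (g x) = g' (b x))
    (ha : Function.Bijective a) (hb : Function.Bijective b) : Function.Bijective d := by
  constructor
  · rw [injective_iff_map_eq_zero]
    intro z hz
    obtain ⟨x, rfl⟩ := h.surj z
    rw [c2] at hz
    obtain ⟨w, hw⟩ := (h'.ex _).1 hz
    obtain ⟨v, rfl⟩ := ha.2 w
    rw [← c1] at hw
    rw [← hb.1 hw]
    exact (h.ex _).2 ⟨_, rfl⟩
  · intro y
    obtain ⟨z, rfl⟩ := h'.surj y
    obtain ⟨x, rfl⟩ := hb.2 z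
    exact ⟨g x, c2 x⟩

theorem SES.bij_left {f : A →ₗ[R] B} {g : B →ₗ[R] D} (h : SES f g)
    {f' : A' →ₗ[R] B'} {g' : B' →ₗ[R] D'} (h' : SES f' g')
    {a : A →ₗ[R] A'} {b : B →ₗ[R] B'} {d : D →ₗ[R] D'}
    (c1 : ∀ x, b (f x) = f' (a x)) (c2 : ∀ x, d (g x) = g' (b x))
    (hb : Function.Bijective b) (hd : Function.Bijective d) : Function.Bijective a := by
  constructor
  · rw [injective_iff_map_eq_zero]
    intro x hx
    apply h.inj
    apply hb.1
    rw [c1, hx]; simp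
  · intro y
    obtain ⟨x, hx⟩ := hb.2 (f' y)
    have : g x = 0 := hd.1 (by rw [c2, hx, map_zero]; exact (h'.ex _).2 ⟨_, rfl⟩)
    obtain ⟨w, rfl⟩ := (h.ex _).1 this
    exact ⟨w, h'.inj (by rw [← c1, hx])⟩

theorem SES.tensor (C : Type u) [AddCommGroup C] [Module R C] {f : A →ₗ[R] B} {g : B →ₗ[R] D}
    (h : SES f g) (hi : Function.Injective (f.rTensor C)) :
    SES (f.rTensor C) (g.rTensor C) :=
  ⟨hi, rTensor_exact C h.ex h.surj, LinearMap.rTensor_surjective C h.surj⟩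

theorem SES.ker (g : B →ₗ[R] D) (h : Function.Surjective g) : SES (LinearMap.ker g).subtype g :=
  ⟨Subtype.val_injective, LinearMap.exact_subtype_ker_map g, h⟩

/-- Auslander class (without the Tor condition). -/
structure AC (R : Type u) [CommRing R] (C N : Type u) [AddCommGroup C] [Module R C]
    [AddCommGroup N] [Module R N] : Prop where
  bij : Function.Bijective (TensorProduct.mk R N C)
  ext : ∀ i, 0 < i → Ez R C (N ⊗[R] C) i

theorem SES.ac_mid {f : A →ₗ[R] B} {g : B →ₗ[R] D} (h : SES f g)
    (hi : Function.Injective (f.rTensor C)) (hA : AC R C A) (hD : AC R C D) : AC R C B where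
  bij := h.bij_mid ((h.tensor C hi).hom_right (hA.ext 1 one_pos)) (fun _ => by ext; simp)
    (fun _ => by ext; simp) hA.bij hD.bij
  ext := fun i hi' => (h.tensor C hi).cov2 (hA.ext i hi') (hD.ext i hi')

theorem SES.ac_right {f : A →ₗ[R] B} {g : B →ₗ[R] D} (h : SES f g)
    (hi : Function.Injective (f.rTensor C)) (hA : AC R C A) (hB : AC R C B) : AC R C D where
  bij := h.bij_right ((h.tensor C hi).hom_right (hA.ext 1 one_pos)) (fun _ => by ext; simp)
    (fun _ => by ext; simp) hA.bij hB.bij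
  ext := fun i hi' => (h.tensor C hi).cov3 (hB.ext i hi') (hA.ext (i+1) (by omega))

theorem Ez_subsingleton_right [Subsingleton D] (i : ℕ) : Ez R A D i :=
  (Ez_punit_right i).congr_right (LinearEquiv.ofSubsingleton PUnit.{u+1} D)

theorem Ez_subsingleton_left [Subsingleton D] (i : ℕ) : Ez R D A i :=
  (Ez_punit_left i).congr_left (LinearEquiv.ofSubsingleton PUnit.{u+1} D)

theorem AC_subsingleton [Subsingleton N] : AC R C N where
  bij := ⟨fun a b _ => Subsingleton.elim _ _, fun y => ⟨0, by
    ext c; exact Subsingleton.elim _ _⟩⟩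
  ext := fun i _ => Ez_subsingleton_right i

theorem AC.congr (e : A ≃ₗ[R] B) (h : AC R C A) : AC R C B :=
  (SES.of_equiv_left e).ac_mid (by
    exact (e.rTensor C).injective) h AC_subsingleton

theorem AC_self (hC : SD R C) : AC R C R where
  bij := by
    have h1 : ∀ r, TensorProduct.mk R R C r =
      (LinearEquiv.congrRight (TensorProduct.lid R C).symm : (C →ₗ[R] C) ≃ₗ[R] _) (LinearMap.lsmul R C r) := by
      intro r
      ext c
      change r ⊗ₜ[R] c = (1 : R) ⊗ₜ[R] (r • c)
      rw [TensorProduct.tmul_smul, TensorProduct.smul_tmul', smul_eq_mul, mul_one]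
    have : ⇑(TensorProduct.mk R R C) = ⇑(LinearEquiv.congrRight (TensorProduct.lid R C).symm :
      (C →ₗ[R] C) ≃ₗ[R] _) ∘ LinearMap.lsmul R C := funext h1
    rw [this]
    exact (LinearEquiv.bijective _).comp hC.bij
  ext := fun i hi => (hC.ext i hi).congr_right (TensorProduct.lid R C).symm

theorem AC_fin (hC : SD R C) (n : ℕ) : AC R C (Fin n → R) := by
  induction n with
  | zero => exact AC_subsingleton
  | succ n ih =>
    have e : (R × (Fin n → R)) ≃ₗ[R] (Fin (n+1) → R) := Fin.consLinearEquiv R (fun _ => R)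
    refine AC.congr e ?_
    have hS : SES (LinearMap.inl R R (Fin n → R)) (LinearMap.snd R R (Fin n → R)) :=
      ⟨LinearMap.inl_injective, Function.Exact.inl_snd, LinearMap.snd_surjective⟩
    refine hS.ac_mid ?_ (AC_self hC) ih
    have h1 : (LinearMap.fst R R (Fin n → R)).rTensor C ∘ₗ (LinearMap.inl R R (Fin n → R)).rTensor C
      = LinearMap.id := by
      rw [← LinearMap.rTensor_comp, LinearMap.fst_comp_inl, LinearMap.rTensor_id]
    exact Function.LeftInverse.injective (g := (LinearMap.fst R R (Fin n → R)).rTensor C)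
      (fun x => LinearMap.congr_fun h1 x)

theorem AC_free (hC : SD R C) [Nontrivial R] [Module.Free R N] [Module.Finite R N] : AC R C N :=
  (AC_fin hC _).congr (Module.finBasis R N).equivFun.symm

theorem rTensor_inj [IsNoetherianRing R] (hC : SD R C) [Module.Finite R A] (f : A →ₗ[R] B)
    (hf : Function.Injective f) (hA : Function.Surjective (TensorProduct.mk R A C))
    (hB : Function.Injective (TensorProduct.mk R B C)) : Function.Injective (f.rTensor C) := by
  have := hC.fin
  rw [← LinearMap.ker_eq_bot, ← Submodule.subsingleton_iff_eq_bot]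
  refine subsingleton_of_hom_faithful hC.ann fun φ => ?_
  obtain ⟨a, ha⟩ := hA (Submodule.subtype _ ∘ₗ φ)
  have h1 : TensorProduct.mk R B C (f a) = 0 := by
    ext c
    have h2 : f.rTensor C (φ c) = 0 := LinearMap.mem_ker.1 (φ c).2
    have h3 : TensorProduct.mk R A C a c = φ c := LinearMap.congr_fun ha c
    rw [← h3] at h2
    simpa using h2
  have h4 : a = 0 := hf (hB (by rw [h1]; simp))
  rw [h4, map_zero] at ha
  ext c
  exact (LinearMap.congr_fun ha c).symm

theorem SD_self (R : Type u) [CommRing R] : SD R R where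
  fin := inferInstance
  bij := ⟨fun a b h => by simpa using LinearMap.congr_fun h 1, fun f => ⟨f 1, by ext; simp⟩⟩
  ext := fun _ hi => Ez_proj' hi

/-- Projective dimension at most `m`, by Ext vanishing. -/
def PDz (R : Type u) [CommRing R] (m : ℕ) (N : Type u) [AddCommGroup N] [Module R N] : Prop :=
  ∀ (Y : Type u) [AddCommGroup Y] [Module R Y] (i : ℕ), m < i → Ez R N Y i

theorem PDz_of_pdimLE (m : ℕ) : ∀ (N : ModuleCat.{u} R), pdimLE R m N → PDz R m N := by
  induction m with
  | zero =>
    intro N h Y _ _ i hi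
    have : Module.Projective R N := h
    exact Ez_proj' hi
  | succ m ih =>
    rintro N ⟨X, K, f, g, hf, hg, hfg, hX, hK⟩ Y _ _ i hi
    obtain ⟨i, rfl⟩ := Nat.exists_eq_succ_of_ne_zero (by omega : i ≠ 0)
    have hS : SES f g := ⟨hf, LinearMap.exact_iff.2 hfg, hg⟩
    exact hS.con3 (ih K hK Y i (by omega)) (Ez_proj _)

theorem SES.pdz {f : A →ₗ[R] B} {g : B →ₗ[R] D} (h : SES f g) [Module.Projective R B] {m : ℕ}
    (hD : PDz R (m+1) D) : PDz R m A := fun Y _ _ i hi =>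
  h.con1 (Ez_proj' (by omega)) (hD Y (i+1) (by omega))

theorem SES.pdz' {f : A →ₗ[R] B} {g : B →ₗ[R] D} (h : SES f g) [Module.Projective R B] {m : ℕ}
    (hD : PDz R m A) : PDz R (m+1) D := fun Y _ _ i hi => by
  obtain ⟨i, rfl⟩ := Nat.exists_eq_succ_of_ne_zero (by omega : i ≠ 0)
  exact h.con3 (hD Y i (by omega)) (Ez_proj _)

theorem PDz.proj (hN : PDz R 0 N) : Module.Projective R N := by
  have hs : Function.Surjective (Finsupp.linearCombination R (id : N → N)) :=
    Finsupp.linearCombination_id_surjective R N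
  obtain ⟨ψ, hψ⟩ := (SES.ker _ hs).cov1' (hN _ 1 one_pos) LinearMap.id
  exact Module.Projective.of_split ψ _ hψ

theorem exists_min_cover [IsLocalRing R] (N : Type u) [AddCommGroup N] [Module R N]
    [Module.Finite R N] : ∃ (n : ℕ) (g : (Fin n → R) →ₗ[R] N), Function.Surjective g ∧
    ∀ v, g v = 0 → ∀ i, v i ∈ IsLocalRing.maximalIdeal R := by
  classical
  have hex : ∃ (n : ℕ), ∃ (g : (Fin n → R) →ₗ[R] N), Function.Surjective g :=
    Module.Finite.exists_fin' R N
  obtain ⟨g, hg⟩ := Nat.find_spec hex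
  refine ⟨Nat.find hex, g, hg, fun v hv i => ?_⟩
  by_contra hc
  have hu : IsUnit (v i) := by simpa using hc
  generalize hn : Nat.find hex = n at g v i
  rcases n with _ | n
  · exact i.elim0
  have hlt : n < Nat.find hex := by omega
  refine Nat.find_min hex hlt ⟨Fintype.linearCombination R (fun j : Fin n => g (Pi.single (i.succAbove j) 1)), ?_⟩
  rw [← LinearMap.range_eq_top, eq_top_iff]
  set G := Fintype.linearCombination R (fun j : Fin n => g (Pi.single (i.succAbove j) 1)) with hG
  have h1 : ∀ j, g (Pi.single (i.succAbove j) 1) ∈ LinearMap.range G := by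
    intro j
    exact ⟨Pi.single j 1, by simp [hG, Fintype.linearCombination_apply_single]⟩
  have h2 : g (Pi.single i 1) ∈ LinearMap.range G := by
    have h3 : v i • g (Pi.single i 1) = - ∑ j, v (i.succAbove j) • g (Pi.single (i.succAbove j) 1) := by
      rw [eq_neg_iff_add_eq_zero, ← Fin.sum_univ_succAbove (fun j => v j • g (Pi.single j 1)) i]
      rw [← hv]
      conv_rhs => rw [pi_eq_sum_univ' v]
      simp
    have h4 : v i • g (Pi.single i 1) ∈ LinearMap.range G := by
      rw [h3]
      exact neg_mem (sum_mem fun j _ => Submodule.smul_mem _ _ (h1 j))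
    exact (Submodule.smul_mem_iff_of_isUnit _ hu).1 h4
  rw [← LinearMap.range_eq_top.2 hg]
  rintro _ ⟨w, rfl⟩
  have : g w = ∑ j, w j • g (Pi.single j 1) := by
    conv_lhs => rw [pi_eq_sum_univ' w]
    simp
  rw [this]
  refine sum_mem fun j _ => Submodule.smul_mem _ _ ?_
  rcases Fin.eq_self_or_eq_succAbove i j with rfl | ⟨j, rfl⟩
  · exact h2
  · exact h1 j
end ACKit

section ABKit
variable {R}
variable [IsLocalRing R] [IsNoetherianRing R]
variable {A B D N C : Type u} [AddCommGroup A] [Module R A] [AddCommGroup B] [Module R B]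
  [AddCommGroup D] [Module R D] [AddCommGroup N] [Module R N] [AddCommGroup C] [Module R C]

theorem AC.nontrivial (h : AC R C N) [Nontrivial N] : Nontrivial (N ⊗[R] C) := by
  by_contra hc
  rw [not_nontrivial_iff_subsingleton] at hc
  obtain ⟨x, y, hxy⟩ := exists_pair_ne N
  exact hxy (h.bij.1 (by ext; exact Subsingleton.elim _ _))

theorem DG_free_tensor {s : ℕ} (hC : DG R s C) [Module.Free R N] [Module.Finite R N] :
    DG R s (N ⊗[R] C) := by
  have e1 : N ⊗[R] C ≃ₗ[R] (Fin (Module.finrank R N) → C) :=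
    ((Module.finBasis R N).equivFun.rTensor C).trans
      ((TensorProduct.comm R _ _).trans (TensorProduct.piScalarRight R R C _))
  exact (DG_pi hC).congr e1.symm

theorem DG_free {s : ℕ} (hC : DG R s R) [Module.Free R N] [Module.Finite R N] :
    DG R s N := (DG_pi hC).congr (Module.finBasis R N).equivFun.symm

theorem min_tensor_contra {t : ℕ} (ht : ringKrullDim R = t) (hC : SD R C)
    {K : Type u} [AddCommGroup K] [Module R K] [Module.Free R K] [Module.Finite R K]
    [Nontrivial K] {n : ℕ} {f : K →ₗ[R] (Fin n → R)} {g : (Fin n → R) →ₗ[R] N}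
    (h : SES f g) (hmin : ∀ v i, f v i ∈ IsLocalRing.maximalIdeal R)
    (hi : Function.Injective (f.rTensor C)) : ¬ DG R t (N ⊗[R] C) := by
  intro hD
  have hf : f = ∑ p : Fin (Module.finrank R K) × Fin n, f (Module.finBasis R K p.1) p.2 •
      ((LinearMap.single R (fun _ => R) p.2) ∘ₗ (Module.finBasis R K).coord p.1) := by
    refine (Module.finBasis R K).ext fun l => ?_
    ext i
    rw [LinearMap.sum_apply, Finset.sum_apply, Finset.sum_eq_single (l, i)]
    · simp
    · rintro ⟨l', i'⟩ _ hne
      by_cases hl : l = l'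
      · subst hl
        have : i ≠ i' := fun h => hne (by rw [h])
        simp [Pi.single_apply, this]
      · simp [Finsupp.single_apply, hl]
    · simp
  have hf' : f.rTensor C = ∑ p : Fin (Module.finrank R K) × Fin n,
      f (Module.finBasis R K p.1) p.2 •
      (((LinearMap.single R (fun _ => R) p.2) ∘ₗ (Module.finBasis R K).coord p.1).rTensor C) := by
    conv_lhs => rw [hf]
    have := map_sum (LinearMap.rTensorHom C) (fun p : Fin (Module.finrank R K) × Fin n => 
      f (Module.finBasis R K p.1) p.2 •
      ((LinearMap.single R (fun _ => R) p.2) ∘ₗ (Module.finBasis R K).coord p.1)) Finset.univ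
    refine Eq.trans this (Finset.sum_congr rfl fun p _ => ?_)
    rw [map_smul]; rfl
  have hK : DG R (t+1) (K ⊗[R] C) := by
    intro i hi'
    exact (h.tensor C hi).cov_min (fun j hj => hD j (by omega)) Finset.univ _ _
      (fun p _ => by rw [ann_k]; exact hmin _ _) hf'
  have := (AC_free (N := K) hC).nontrivial
  have := hC.fin
  exact not_DG_of_dim ht hK

theorem AB1 {t : ℕ} (ht : ringKrullDim R = t) (htR : DG R t R) (hC : SD R C) (m : ℕ) :
    ∀ (N : Type u) [AddCommGroup N] [Module R N] [Module.Finite R N], PDz R m N →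
    AC R C N ∧ (¬ Module.Free R N → ¬ DG R t (N ⊗[R] C)) := by
  induction m with
  | zero =>
    intro N _ _ _ hN
    have := hN.proj
    have : Module.Free R N := Module.free_of_flat_of_isLocalRing
    exact ⟨AC_free hC, fun h => absurd this h⟩
  | succ m ih =>
    intro N _ _ _ hN
    obtain ⟨n, g, hg, hmin⟩ := exists_min_cover (R := R) N
    have hS := SES.ker g hg
    obtain ⟨hK1, hK2⟩ := ih (LinearMap.ker g) (hS.pdz hN)
    have hF : AC R C (Fin n → R) := AC_fin hC n
    have hi := rTensor_inj hC _ hS.inj hK1.bij.2 hF.bij.1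
    refine ⟨hS.ac_right hi hK1 hF, fun hnf => ?_⟩
    by_cases hKf : Module.Free R (LinearMap.ker g)
    · have hnt : Nontrivial (LinearMap.ker g) := by
        by_contra hc
        rw [not_nontrivial_iff_subsingleton, Submodule.subsingleton_iff_eq_bot,
          LinearMap.ker_eq_bot] at hc
        exact hnf (Module.Free.of_equiv (LinearEquiv.ofBijective g ⟨hc, hg⟩))
      exact min_tensor_contra ht hC hS (fun v i => hmin _ v.2 i) hi
    · exact (hS.tensor C hi).dp_shift_lt (DG_free_tensor (hC.dg htR)) (hK2 hKf)

theorem AB1' {t : ℕ} (ht : ringKrullDim R = t) (htR : DG R t R) {m : ℕ}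
    [Module.Finite R N] (hN : PDz R m N) (hnf : ¬ Module.Free R N) : ¬ DG R t N := fun h =>
  (AB1 ht htR (SD_self R) m N hN).2 hnf (h.congr (TensorProduct.rid R N).symm)

theorem dp_eq_of_nontrivial {t : ℕ} (ht : ringKrullDim R = t) [Module.Finite R N] [Nontrivial N]
    (h : DG R t N) : dp R N = t := dp_eq_iff.2 ⟨h, not_DG_of_dim ht⟩

theorem dp_subsingleton [Subsingleton A] [Subsingleton B] : dp R A = dp R B :=
  dp_congr (LinearEquiv.ofSubsingleton A B)

theorem AB2 {t : ℕ} (ht : ringKrullDim R = t) (htR : DG R t R) (hC : SD R C) (m : ℕ) :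
    ∀ (N : Type u) [AddCommGroup N] [Module R N] [Module.Finite R N], PDz R m N →
    dp R (N ⊗[R] C) = dp R N := by
  have hCf := hC.fin
  have hfree : ∀ (N : Type u) [AddCommGroup N] [Module R N] [Module.Finite R N]
    [Module.Free R N], dp R (N ⊗[R] C) = dp R N := by
    intro N _ _ _ _
    rcases subsingleton_or_nontrivial N with h | h
    · exact dp_subsingleton
    · have := (AC_free (N := N) hC).nontrivial
      rw [dp_eq_of_nontrivial ht (DG_free (N := N) htR), dp_eq_of_nontrivial ht (DG_free_tensor (hC.dg htR))]
  induction m with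
  | zero =>
    intro N _ _ _ hN
    have := hN.proj
    have : Module.Free R N := Module.free_of_flat_of_isLocalRing
    exact hfree N
  | succ m ih =>
    intro N _ _ _ hN
    by_cases hf : Module.Free R N
    · exact hfree N
    obtain ⟨n, g, hg⟩ := Module.Finite.exists_fin' R N
    have hS := SES.ker g hg
    obtain ⟨hK1, hK2⟩ := AB1 ht htR hC m (LinearMap.ker g) (hS.pdz hN)
    have hi := rTensor_inj hC _ hS.inj hK1.bij.2 (AC_fin hC n).bij.1
    have h1 := hS.dp_shift (DG_free htR) (AB1' ht htR hN hf)
    have h2 := (hS.tensor C hi).dp_shift (DG_free_tensor (hC.dg htR))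
      ((AB1 ht htR hC (m+1) N hN).2 hf)
    have h3 := ih (LinearMap.ker g) (hS.pdz hN)
    rw [h1, h2] at h3
    exact (ENat.addLECancellable_of_ne_top ENat.one_ne_top).inj_left.1 h3
end ABKit

section TRKit
variable {R}
variable {A B D N C : Type u} [AddCommGroup A] [Module R A] [AddCommGroup B] [Module R B]
  [AddCommGroup D] [Module R D] [AddCommGroup N] [Module R N] [AddCommGroup C] [Module R C]

/-- The evaluation map. -/
def evm (R : Type u) [CommRing R] (C A : Type u) [AddCommGroup C] [Module R C] [AddCommGroup A]
    [Module R A] : A →ₗ[R] ((A →ₗ[R] C) →ₗ[R] C) :=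
  (LinearMap.id : (A →ₗ[R] C) →ₗ[R] (A →ₗ[R] C)).flip

@[simp] theorem evm_apply (a : A) (f : A →ₗ[R] C) : evm R C A a f = f a := rfl

/-- Unbundled totally `C`-reflexive. -/
structure TR (R : Type u) [CommRing R] (C A : Type u) [AddCommGroup C] [Module R C]
    [AddCommGroup A] [Module R A] : Prop where
  fin : Module.Finite R A
  bij : Function.Bijective (evm R C A)
  ext1 : ∀ i, 0 < i → Ez R A C i
  ext2 : ∀ i, 0 < i → Ez R (A →ₗ[R] C) C i

theorem TR_iff (C A : ModuleCat.{u} R) : IsTotallyCReflexive R C A ↔ TR R C A := by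
  constructor
  · rintro ⟨h1, h2, h3, h4⟩
    exact ⟨h1, h2, fun i hi => (extM_iff_Ez _ _ _).1 (h3 i hi),
      fun i hi => (extM_iff_Ez _ _ _).1 (h4 i hi)⟩
  · rintro ⟨h1, h2, h3, h4⟩
    exact ⟨h1, h2, fun i hi => (extM_iff_Ez _ _ _).2 (h3 i hi),
      fun i hi => (extM_iff_Ez (R := R) (ModuleCat.of R _) _ _).2 (h4 i hi)⟩

theorem SES.tr_mid [Module.Finite R B] {f : A →ₗ[R] B} {g : B →ₗ[R] D} (h : SES f g)
    (hA : TR R C A) (hD : TR R C D) : TR R C B where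
  fin := inferInstance
  ext1 := fun i hi => h.con2 (hA.ext1 i hi) (hD.ext1 i hi)
  ext2 := fun i hi => (h.hom_left (hD.ext1 1 one_pos)).con2 (hD.ext2 i hi) (hA.ext2 i hi)
  bij := h.bij_mid ((h.hom_left (hD.ext1 1 one_pos)).hom_left (hA.ext2 1 one_pos))
    (fun x => rfl) (fun x => rfl) hA.bij hD.bij

theorem SES.tr_left [IsNoetherianRing R] {f : A →ₗ[R] B} {g : B →ₗ[R] D} (h : SES f g)
    (hB : TR R C B) (hD : TR R C D) : TR R C A := by
  have hS := h.hom_left (hD.ext1 1 one_pos)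
  have h2 : ∀ i, 0 < i → Ez R (A →ₗ[R] C) C i := by
    intro i hi
    obtain ⟨i, rfl⟩ := Nat.exists_eq_succ_of_ne_zero hi.ne'
    rcases Nat.eq_zero_or_pos i with rfl | hi
    · refine hS.con3' (fun φ => ?_) (hB.ext2 1 one_pos)
      obtain ⟨d, rfl⟩ := hD.bij.2 φ
      obtain ⟨b, rfl⟩ := h.surj d
      exact ⟨evm R C B b, rfl⟩
    · exact hS.con3 (hD.ext2 i hi) (hB.ext2 _ (Nat.succ_pos i))
  have := hB.fin
  exact
  { fin := Module.Finite.of_injective f h.inj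
    ext1 := fun i hi => h.con1 (hB.ext1 i hi) (hD.ext1 _ (Nat.succ_pos i))
    ext2 := h2
    bij := h.bij_left (hS.hom_left (h2 1 one_pos)) (fun x => rfl) (fun x => rfl) hB.bij hD.bij }

theorem TR_subsingleton [Subsingleton A] : TR R C A where
  fin := inferInstance
  ext1 := fun i _ => Ez_subsingleton_left i
  ext2 := fun i _ => by
    have : Subsingleton (A →ₗ[R] C) := ⟨fun a b => by
      ext x; rw [Subsingleton.elim x 0, map_zero, map_zero]⟩
    exact Ez_subsingleton_left i
  bij := ⟨fun a b _ => Subsingleton.elim _ _, fun y => ⟨0, by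
    ext f
    have : f = 0 := by ext x; rw [Subsingleton.elim x 0, map_zero, map_zero]
    rw [this]; simp⟩⟩

theorem TR.congr (e : A ≃ₗ[R] B) (h : TR R C A) : TR R C B := by
  have := h.fin
  have := Module.Finite.equiv e
  exact (SES.of_equiv_left e).tr_mid h TR_subsingleton

theorem TR_self (hC : SD R C) : TR R C R where
  fin := inferInstance
  ext1 := fun i hi => Ez_proj' hi
  ext2 := fun i hi => (hC.ext i hi).congr_left (LinearMap.ringLmapEquivSelf R R C).symm
  bij := by
    let E : (C →ₗ[R] C) ≃ₗ[R] ((R →ₗ[R] C) →ₗ[R] C) :=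
      (LinearEquiv.congrLeft C R (LinearMap.ringLmapEquivSelf R R C).symm)
    have : ⇑(evm R C R) = ⇑E ∘ LinearMap.lsmul R C := by
      funext r
      ext f
      change f r = r • f 1
      rw [← map_smul, smul_eq_mul, mul_one]
    rw [this]
    exact E.bijective.comp hC.bij

theorem TR_fin (hC : SD R C) (n : ℕ) : TR R C (Fin n → R) := by
  induction n with
  | zero => exact TR_subsingleton
  | succ n ih =>
    have e : (R × (Fin n → R)) ≃ₗ[R] (Fin (n+1) → R) := Fin.consLinearEquiv R (fun _ => R)
    refine TR.congr e ?_
    have hS : SES (LinearMap.inl R R (Fin n → R)) (LinearMap.snd R R (Fin n → R)) :=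
      ⟨LinearMap.inl_injective, Function.Exact.inl_snd, LinearMap.snd_surjective⟩
    exact hS.tr_mid (TR_self hC) ih

theorem TR_free (hC : SD R C) [Nontrivial R] [Module.Free R N] [Module.Finite R N] : TR R C N :=
  (TR_fin hC _).congr (Module.finBasis R N).equivFun.symm

theorem TR.prod (hA : TR R C A) (hB : TR R C B) : TR R C (A × B) := by
  have := hA.fin
  have := hB.fin
  have hS : SES (LinearMap.inl R A B) (LinearMap.snd R A B) :=
    ⟨LinearMap.inl_injective, Function.Exact.inl_snd, LinearMap.snd_surjective⟩
  exact hS.tr_mid hA hB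

theorem gcdimLE.congr {C : ModuleCat.{u} R} : ∀ {n : ℕ} {M N : ModuleCat.{u} R}
    (_ : M ≃ₗ[R] N), gcdimLE R C n M → gcdimLE R C n N
  | 0, M, N, e, h => (TR_iff C N).2 (((TR_iff C M).1 h).congr e)
  | n+1, M, N, e, h => by
    obtain ⟨X, K, f, g, h1, h2, h3, h4, h5⟩ := h
    refine ⟨X, K, f, e.toLinearMap ∘ₗ g, h1, e.surjective.comp h2, ?_, h4, h5⟩
    rw [← h3]; ext x; simp

theorem gcdimLE_syz [IsNoetherianRing R] [Nontrivial R] {C : ModuleCat.{u} R} (hC : SD R C) (n : ℕ)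
    (N : ModuleCat.{u} R) (hN : gcdimLE R C (n+1) N) (P : Type u) [AddCommGroup P] [Module R P]
    [Module.Free R P] [Module.Finite R P] (g : P →ₗ[R] N) (hg : Function.Surjective g) :
    gcdimLE R C n (ModuleCat.of R (LinearMap.ker g)) := by
  obtain ⟨X, K', f, q, hf, hq, hfq, hX, hK'⟩ := hN
  have hX := (TR_iff C X).1 hX
  obtain ⟨s, hs⟩ := Module.projective_lifting_property q g hq
  have hs' : ∀ p, q (s p) = g p := fun p => LinearMap.congr_fun hs p
  have key : ∀ (X' : ModuleCat.{u} R) (w : X' →ₗ[R] X), TR R C X' →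
      LinearMap.range w = LinearMap.ker q →
      ∃ (T : ModuleCat.{u} R) (τ : T →ₗ[R] LinearMap.ker g), TR R C T ∧
        Function.Surjective τ ∧ Nonempty (LinearMap.ker w ≃ₗ[R] LinearMap.ker τ) := by
    intro X' w hX' hw
    let φ : (X' × P) →ₗ[R] X := (s ∘ₗ LinearMap.snd R X' P) - (w ∘ₗ LinearMap.fst R X' P)
    have hφ : ∀ x, φ x = s x.2 - w x.1 := fun x => rfl
    have hφs : Function.Surjective φ := by
      intro x
      obtain ⟨p, hp⟩ := hg (q x)
      have : s p - x ∈ LinearMap.range w := by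
        rw [hw, LinearMap.mem_ker, map_sub, hs', hp, sub_self]
      obtain ⟨y, hy⟩ := this
      exact ⟨(y, p), by rw [hφ, hy]; abel⟩
    have hT : TR R C (LinearMap.ker φ) := (SES.ker φ hφs).tr_left (hX'.prod (TR_free hC)) hX
    have hmem : ∀ x : LinearMap.ker φ, s x.1.2 = w x.1.1 := fun x =>
      sub_eq_zero.1 (x.2 : φ x.1 = 0)
    let τ : LinearMap.ker φ →ₗ[R] LinearMap.ker g :=
      (LinearMap.snd R X' P ∘ₗ (LinearMap.ker φ).subtype).codRestrict _ (fun x => by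
        rw [LinearMap.mem_ker]
        change g x.1.2 = 0
        rw [← hs', hmem, ← LinearMap.mem_ker, ← hw]
        exact ⟨_, rfl⟩)
    have hτ : ∀ x, (τ x : P) = x.1.2 := fun x => rfl
    refine ⟨ModuleCat.of R (LinearMap.ker φ), τ, hT, ?_, ⟨?_⟩⟩
    · rintro ⟨p, hp⟩
      have : s p ∈ LinearMap.range w := by
        rw [hw, LinearMap.mem_ker, hs']; exact hp
      obtain ⟨y, hy⟩ := this
      exact ⟨⟨(y, p), by rw [LinearMap.mem_ker, hφ]; simp [hy]⟩, Subtype.ext rfl⟩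
    · refine LinearEquiv.ofBijective (LinearMap.codRestrict _ (LinearMap.codRestrict _
        (LinearMap.inl R X' P ∘ₗ (LinearMap.ker w).subtype) (fun x => ?_)) (fun x => ?_)) ⟨?_, ?_⟩
      · rw [LinearMap.mem_ker, hφ]
        have : w x = 0 := x.2
        simp [this]
      · rw [LinearMap.mem_ker]
        exact Subtype.ext rfl
      · intro a b hab
        have h1 := congrArg (fun z => z.1.1.1) hab
        exact Subtype.ext h1
      · rintro ⟨⟨⟨x, p⟩, h1⟩, h2⟩
        have hp : p = 0 := congrArg Subtype.val h2
        subst hp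
        have hx : w x = 0 := by
          have := hmem ⟨(x, 0), h1⟩
          simpa using this.symm
        exact ⟨⟨x, hx⟩, rfl⟩
  cases n with
  | zero =>
    obtain ⟨T, τ, hT, hτ, ⟨e⟩⟩ := key K' f ((TR_iff C K').1 hK') hfq.symm
    have hinj : LinearMap.ker τ = ⊥ := by
      rw [LinearMap.ker_eq_bot.2 hf] at e
      rw [← Submodule.subsingleton_iff_eq_bot]
      exact e.symm.toEquiv.subsingleton
    exact (TR_iff C (ModuleCat.of R _)).2 (hT.congr (LinearEquiv.ofBijective τ
      ⟨LinearMap.ker_eq_bot.1 hinj, hτ⟩))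
  | succ n =>
    obtain ⟨X', K'', f', q', hf', hq', hfq', hX', hK''⟩ := hK'
    obtain ⟨T, τ, hT, hτ, ⟨e⟩⟩ := key X' (f ∘ₗ q') ((TR_iff C X').1 hX') (by
      rw [LinearMap.range_comp, LinearMap.range_eq_top.2 hq', Submodule.map_top, hfq])
    have hk : LinearMap.ker (f ∘ₗ q') = LinearMap.range f' := by
      rw [← hfq']; ext x
      simp only [LinearMap.mem_ker, LinearMap.comp_apply]
      exact map_eq_zero_iff f hf
    let e2 : K'' ≃ₗ[R] LinearMap.ker τ :=
      (LinearEquiv.ofInjective f' hf').trans ((LinearEquiv.ofEq _ _ hk.symm).trans e)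
    exact ⟨T, ModuleCat.of R (LinearMap.ker τ), (LinearMap.ker τ).subtype, τ,
      Subtype.val_injective, hτ, by simp, (TR_iff C T).2 hT, gcdimLE.congr (N := ModuleCat.of R (LinearMap.ker τ)) e2 hK''⟩

end TRKit

section GradeKit
variable {R}
variable {K P N W C : Type u} [AddCommGroup K] [Module R K] [AddCommGroup P] [Module R P]
  [AddCommGroup W] [Module R W] [AddCommGroup N] [Module R N] [AddCommGroup C] [Module R C]

/-- Auxiliary torsionfreeness condition. -/
structure Tk (R : Type u) [CommRing R] (C : Type u) [AddCommGroup C] [Module R C] (k : ℕ)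
    (N : Type u) [AddCommGroup N] [Module R N] : Prop where
  inj : 1 ≤ k → Function.Injective (evm R C N)
  surj : 2 ≤ k → Function.Surjective (evm R C N)
  ext : ∀ i, 1 ≤ i → i + 2 ≤ k → Ez R (N →ₗ[R] C) C i

theorem Tk_zero : Tk R C 0 N := ⟨by omega, by omega, by omega⟩

theorem Tk.W_ext {k : ℕ} (hN : Tk R C k N) (hP : TR R C P) {g : P →ₗ[R] N}
    (hg : Function.Surjective g) {w : (P →ₗ[R] C) →ₗ[R] W} (h : SES (LinearMap.lcomp R C g) w)
    (i : ℕ) (hi : 1 ≤ i) (hik : i + 1 ≤ k) : Ez R W C i := by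
  obtain ⟨i, rfl⟩ := Nat.exists_eq_succ_of_ne_zero (by omega : i ≠ 0)
  rcases Nat.eq_zero_or_pos i with rfl | hi
  · refine h.con3' (fun φ => ?_) (hP.ext2 1 one_pos)
    obtain ⟨n, rfl⟩ := hN.surj (by omega) φ
    obtain ⟨p, rfl⟩ := hg n
    exact ⟨evm R C P p, rfl⟩
  · exact h.con3 (hN.ext i hi (by omega)) (hP.ext2 _ (Nat.succ_pos i))

theorem Tk.W_hom {k : ℕ} (hk : 1 ≤ k) (hN : Tk R C k N) (hP : TR R C P) {g : P →ₗ[R] N}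
    {w : (P →ₗ[R] C) →ₗ[R] W} (h : SES (LinearMap.lcomp R C g) w)
    (ψ : W →ₗ[R] C) : ∃ p, g p = 0 ∧ ∀ x : P →ₗ[R] C, ψ (w x) = x p := by
  obtain ⟨p, hp⟩ := hP.bij.2 (ψ ∘ₗ w)
  refine ⟨p, hN.inj hk ?_, fun x => (LinearMap.congr_fun hp x).symm⟩
  ext y
  have h1 := LinearMap.congr_fun hp (LinearMap.lcomp R C g y)
  have h2 : w (LinearMap.lcomp R C g y) = 0 := (h.ex _).2 ⟨_, rfl⟩
  rw [LinearMap.comp_apply, h2, map_zero] at h1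
  simpa using h1

theorem Tk.step {k : ℕ} (hN : Tk R C k N) (hP : TR R C P) {f : K →ₗ[R] P} {g : P →ₗ[R] N}
    (h : SES f g) (hE : Ez R N C 1) : Tk R C (k+1) K := by
  have hS := h.hom_left (Y := C) hE
  refine ⟨fun _ => ?_, fun hk ψ => ?_, fun i hi hik => hN.W_ext hP h.surj hS i hi (by omega)⟩
  · rw [injective_iff_map_eq_zero]
    intro x hx
    apply h.inj
    apply hP.bij.1
    ext y
    simpa using LinearMap.congr_fun hx (y ∘ₗ f)
  · obtain ⟨p, hp, hψ⟩ := hN.W_hom (by omega) hP hS ψ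
    obtain ⟨x, rfl⟩ := (h.ex p).1 hp
    refine ⟨x, ?_⟩
    ext y
    obtain ⟨y, rfl⟩ := hS.surj y
    rw [hψ]; rfl

/-- The image of the dual map. -/
abbrev Zm (f : K →ₗ[R] P) (C : Type u) [AddCommGroup C] [Module R C] : Submodule R (K →ₗ[R] C) :=
  LinearMap.range (LinearMap.lcomp R C f)

theorem SES.Z_left {f : K →ₗ[R] P} {g : P →ₗ[R] N} (h : SES f g) :
    SES (LinearMap.lcomp R C g) (LinearMap.lcomp R C f).rangeRestrict where
  inj := fun a b hab => by
    ext x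
    obtain ⟨x, rfl⟩ := h.surj x
    exact LinearMap.congr_fun hab x
  ex := by
    intro φ
    constructor
    · intro hφ
      have hφ' : LinearMap.lcomp R C f φ = 0 := congrArg Subtype.val hφ
      have hle : LinearMap.ker g ≤ LinearMap.ker φ := by
        intro x hx
        obtain ⟨y, rfl⟩ := (h.ex x).1 hx
        exact LinearMap.congr_fun hφ' y
      refine ⟨(LinearMap.ker g).liftQ φ hle ∘ₗ (g.quotKerEquivOfSurjective h.surj).symm, ?_⟩
      ext x
      have : (g.quotKerEquivOfSurjective h.surj).symm (g x) = Submodule.Quotient.mk x := by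
        rw [LinearEquiv.symm_apply_eq]; rfl
      simp [this]
    · rintro ⟨ψ, rfl⟩
      ext x
      have : g (f x) = 0 := (h.ex _).2 ⟨_, rfl⟩
      simp [this]
  surj := LinearMap.surjective_rangeRestrict _

theorem SES.Z_right (f : K →ₗ[R] P) : SES (Zm f C).subtype (Zm f C).mkQ :=
  ⟨Subtype.val_injective, LinearMap.exact_subtype_mkQ _, Submodule.mkQ_surjective _⟩

theorem Tk.base {k : ℕ} (hN : Tk R C k N) (hP : TR R C P) (hK : TR R C K) {f : K →ₗ[R] P}
    {g : P →ₗ[R] N} (h : SES f g) (j : ℕ) (hj : j < 1 + k) :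
    Ez R ((K →ₗ[R] C) ⧸ Zm f C) C j := by
  have hZ := h.Z_left (C := C)
  have hE := SES.Z_right (C := C) f
  rcases j with _ | j
  · rw [Ez0']
    intro ψ
    obtain ⟨x, hx⟩ := hK.bij.2 (ψ ∘ₗ (Zm f C).mkQ)
    have hx0 : x = 0 := by
      apply h.inj
      apply hP.bij.1
      ext y
      have h1 := LinearMap.congr_fun hx (y ∘ₗ f)
      have h2 : (Zm f C).mkQ (y ∘ₗ f) = 0 := (hE.ex _).2 ⟨⟨_, ⟨y, rfl⟩⟩, rfl⟩
      rw [LinearMap.comp_apply, h2] at h1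
      simpa using h1
    rw [hx0, map_zero] at hx
    ext y
    simpa using (LinearMap.congr_fun hx y).symm
  rcases Nat.eq_zero_or_pos j with rfl | hj'
  · refine hE.con3' (fun φ => ?_) (hK.ext2 1 one_pos)
    obtain ⟨p, hp, hφ⟩ := hN.W_hom (by omega) hP hZ φ
    obtain ⟨x, rfl⟩ := (h.ex p).1 hp
    refine ⟨evm R C K x, ?_⟩
    ext z
    obtain ⟨y, rfl⟩ := hZ.surj z
    rw [hφ]; rfl
  · exact hE.con3 (hN.W_ext hP h.surj hZ j hj' (by omega)) (hK.ext2 _ (Nat.succ_pos j))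

/-- Unbundled Ext module. -/
abbrev EX (R : Type u) [CommRing R] (N C : Type u) [AddCommGroup N] [Module R N]
    [AddCommGroup C] [Module R C] (n : ℕ) : Type u :=
  Abelian.Ext (ModuleCat.of R N) (ModuleCat.of R C) n

theorem grade_main [IsNoetherianRing R] [Nontrivial R] {C : ModuleCat.{u} R} (hC : SD R C) (n : ℕ) :
    ∀ (k : ℕ) (N : Type u) [AddCommGroup N] [Module R N] [Module.Finite R N],
    gcdimLE R C (n+1) (ModuleCat.of R N) → Tk R C k N → (∀ i, 0 < i → i < n+1 → Ez R N C i) →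
    Module.Finite R (EX R N C (n+1)) ∧ ∀ j < n + 1 + k, Ez R (EX R N C (n+1)) C j := by
  have hCf := hC.fin
  induction n with
  | zero =>
    intro k N _ _ _ hG hT hE
    obtain ⟨r, g, hg⟩ := Module.Finite.exists_fin' R N
    have hS := SES.ker g hg
    have hK := (TR_iff C (ModuleCat.of R _)).1 (gcdimLE_syz hC 0 _ hG _ g hg)
    obtain ⟨e⟩ := hS.shift0 (Y := C) (Ez_proj _)
    exact ⟨Module.Finite.equiv e, fun j hj =>
      (hT.base (TR_fin hC r) hK hS j (by omega)).congr_left e⟩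
  | succ n ih =>
    intro k N _ _ _ hG hT hE
    obtain ⟨r, g, hg⟩ := Module.Finite.exists_fin' R N
    have hS := SES.ker g hg
    obtain ⟨h1, h2⟩ := ih (k+1) (LinearMap.ker g) (gcdimLE_syz hC _ _ hG _ g hg)
      (hT.step (TR_fin hC r) hS (hE 1 one_pos (by omega)))
      (fun i hi hin => hS.con1 (Ez_proj' hi) (hE (i+1) (by omega) (by omega)))
    obtain ⟨e⟩ := hS.shift (Y := C) (i := n+1) (Ez_proj _) (Ez_proj _)
    exact ⟨Module.Finite.equiv e, fun j hj => (h2 j (by omega)).congr_left e⟩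

theorem depthZ_main [IsNoetherianRing R] [IsLocalRing R] {C : ModuleCat.{u} R} (hC : SD R C) 
    {t : ℕ} (htR : DG R t R) (n : ℕ) :
    ∀ (N : Type u) [AddCommGroup N] [Module R N] [Module.Finite R N],
    gcdimLE R C (n+1) (ModuleCat.of R N) → (∀ i, 0 < i → i < n+1 → Ez R N C i) →
    dp R (EX R N C (n+1)) + (n+1 : ℕ) ≤ t →
    ∀ (P : Type u) [AddCommGroup P] [Module R P] [Module.Finite R P] [Module.Free R P]
      (g : P →ₗ[R] N), Function.Surjective g →
      dp R (Zm (LinearMap.ker g).subtype C) = dp R (EX R N C (n+1)) + (n+1 : ℕ) := by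
  have hCf := hC.fin
  have hlt : ∀ (a : ℕ∞) (m : ℕ), a + (m+1 : ℕ) ≤ t → a + m < t := by
    intro a m h
    have ha : a ≠ ⊤ := by rintro rfl; simp at h
    lift a to ℕ using ha
    norm_cast at *
  induction n with
  | zero =>
    intro N _ _ _ hG hE hle P _ _ _ _ g hg
    have hS := SES.ker g hg
    have hK := (TR_iff C (ModuleCat.of R _)).1 (gcdimLE_syz hC 0 _ hG _ g hg)
    have := hK.fin
    obtain ⟨e⟩ := hS.shift0 (Y := C) (Ez_proj _)
    have h1 := DG_hom t C hK.ext1 (hC.dg htR)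
    have h2 := (SES.Z_right (C := C) (LinearMap.ker g).subtype).dp_shift h1 (fun h => by
      have h3 := le_dp.2 (h.congr e)
      exact absurd (h3.trans_lt (by simpa using hlt _ 0 hle) ) (lt_irrefl _))
    rw [h2, dp_congr e]; simp
  | succ n ih =>
    intro N _ _ _ hG hE hle P _ _ _ _ g hg
    have hS := SES.ker g hg
    have hG' := gcdimLE_syz hC _ _ hG _ g hg
    have hE' : ∀ i, 0 < i → i < n + 1 → Ez R (LinearMap.ker g) C i := fun i hi hin =>
      hS.con1 (Ez_proj' hi) (hE (i+1) (by omega) (by omega))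
    obtain ⟨e⟩ := hS.shift (Y := C) (i := n+1) (Ez_proj _) (Ez_proj _)
    obtain ⟨r, g', hg'⟩ := Module.Finite.exists_fin' R (LinearMap.ker g)
    have he := dp_congr e
    have hlt' := hlt _ _ hle
    have h4 := ih (LinearMap.ker g) hG' hE' (by rw [he]; exact hlt'.le) _ g' hg'
    have hS' := SES.ker g' hg'
    have h5 : DG R t ((Fin r → R) →ₗ[R] C) :=
      DG_hom t C (fun i hi => Ez_proj' hi) (hC.dg htR)
    have h6 := (hS'.Z_left (C := C)).dp_shift h5 (fun h => by
      have h7 := le_dp.2 h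
      rw [h4, he] at h7
      exact absurd (h7.trans_lt hlt') (lt_irrefl _))
    have htop : Zm (LinearMap.ker g).subtype C = ⊤ :=
      LinearMap.range_eq_top.2 (hS.hom_left (hE 1 one_pos (by omega))).surj
    rw [dp_congr ((LinearEquiv.ofEq _ _ htop).trans Submodule.topEquiv), h6, h4, he, add_assoc]
    norm_cast

theorem dpE_le [IsNoetherianRing R] [IsLocalRing R] (hC : SD R C) {t : ℕ}
    (ht : ringKrullDim R = t) {E : Type u} [AddCommGroup E] [Module R E] [Module.Finite R E]
    [Nontrivial E] {n : ℕ} (h : ∀ j < n, Ez R E C j) : dp R E + n ≤ t := by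
  have hCf := hC.fin
  have h1 := supportDim_add_le (X := E) n C (by
    rw [Module.support_eq_zeroLocus (M := C), hC.ann]; simp) h
  have h2 := h1.trans (Module.supportDim_le_ringKrullDim R C)
  rw [ht] at h2
  have h3 : ∀ s : ℕ, DG R s E → s + n ≤ t := by
    intro s hs
    have h4 : (s : WithBot ℕ∞) + n ≤ t := le_trans (by gcongr; exact dp_le_supportDim hs) h2
    exact_mod_cast h4
  have hne : dp R E ≠ ⊤ := by
    intro htop
    have := h3 (t+1) (le_dp.1 (by rw [htop]; exact le_top))
    omega
  obtain ⟨d, hd⟩ := ENat.ne_top_iff_exists.1 hne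
  have := h3 d (le_dp.1 hd.le)
  rw [← hd]
  exact_mod_cast this
end GradeKit

section LambdaKit
variable {R}

theorem cover_lift {P Q T : Type u} [AddCommGroup P] [Module R P] [AddCommGroup Q] [Module R Q]
    [AddCommGroup T] [Module R T] [Module.Projective R P] (p : P →ₗ[R] T) (q : Q →ₗ[R] T)
    (hp : Function.Surjective p) (hq : Function.Surjective q)
    (hqs : ∀ N : Submodule R Q, N ⊔ LinearMap.ker q = ⊤ → N = ⊤) :
    ∃ φ : P →ₗ[R] Q, q ∘ₗ φ = p ∧ Function.Surjective φ := by
  obtain ⟨φ, hφ⟩ := Module.projective_lifting_property q p hq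
  refine ⟨φ, hφ, LinearMap.range_eq_top.1 (hqs _ ?_)⟩
  rw [eq_top_iff]
  intro x _
  obtain ⟨y, hy⟩ := hp (q x)
  have h1 : q (φ y) = q x := by rw [← hy, ← hφ]; rfl
  have h2 : x = φ y + (x - φ y) := by abel
  rw [h2]
  refine Submodule.add_mem_sup ⟨y, rfl⟩ ?_
  rw [LinearMap.mem_ker, map_sub, h1, sub_self]

theorem cover_ker [IsNoetherianRing R] {P Q T : Type u} [AddCommGroup P] [Module R P]
    [AddCommGroup Q] [Module R Q] [AddCommGroup T] [Module R T] [Module.Projective R P]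
    [Module.Projective R Q] [Module.Finite R P] (p : P →ₗ[R] T)
    (q : Q →ₗ[R] T) (hp : Function.Surjective p) (hq : Function.Surjective q)
    (hps : ∀ N : Submodule R P, N ⊔ LinearMap.ker p = ⊤ → N = ⊤)
    (hqs : ∀ N : Submodule R Q, N ⊔ LinearMap.ker q = ⊤ → N = ⊤) :
    Nonempty (LinearMap.ker p ≃ₗ[R] LinearMap.ker q) := by
  obtain ⟨φ, hφ, hφs⟩ := cover_lift p q hp hq hqs
  obtain ⟨ψ, hψ, hψs⟩ := cover_lift q p hq hp hps
  have hs : Function.Surjective (ψ ∘ₗ φ) := by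
    rw [LinearMap.coe_comp]; exact hψs.comp hφs
  have hi : Function.Injective (ψ ∘ₗ φ) := IsNoetherian.injective_of_surjective_endomorphism _ hs
  have hφi : Function.Injective φ := by
    rw [LinearMap.coe_comp] at hi; exact hi.of_comp
  let e := LinearEquiv.ofBijective φ ⟨hφi, hφs⟩
  refine ⟨e.ofSubmodules _ _ ?_⟩
  ext x
  constructor
  · rintro ⟨y, hy, rfl⟩
    rw [LinearMap.mem_ker]
    exact (LinearMap.congr_fun hφ y).trans hy
  · intro hx
    obtain ⟨y, rfl⟩ := hφs x
    refine ⟨y, ?_, rfl⟩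
    exact (LinearMap.congr_fun hφ y).symm.trans hx

theorem min_dual [IsLocalRing R] {P0 M : Type u} [AddCommGroup P0] [Module R P0]
    [AddCommGroup M] [Module R M] (π : P0 →ₗ[R] M)
    (hs : ∀ N : Submodule R P0, N ⊔ LinearMap.ker π = ⊤ → N = ⊤) (f : P0 →ₗ[R] R) (x : P0)
    (hx : π x = 0) : f x ∈ IsLocalRing.maximalIdeal R := by
  by_contra h
  rw [IsLocalRing.mem_maximalIdeal, mem_nonunits_iff, not_not] at h
  obtain ⟨u, hu⟩ := h
  have h1 : LinearMap.ker f = ⊤ := by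
    apply hs
    rw [eq_top_iff]
    intro y _
    have h2 : y = (y - (f y * ↑u⁻¹) • x) + (f y * ↑u⁻¹) • x := by abel
    rw [h2]
    refine Submodule.add_mem_sup ?_ ?_
    · rw [LinearMap.mem_ker, map_sub, map_smul, ← hu, smul_eq_mul, mul_assoc, Units.inv_mul]
      simp
    · rw [LinearMap.mem_ker, map_smul, hx, smul_zero]
  have h3 : f x = 0 := by
    have : x ∈ LinearMap.ker f := h1 ▸ Submodule.mem_top
    exact this
  rw [h3] at hu
  exact u.ne_zero hu

theorem superfluous_dual [IsLocalRing R] {P1 P0 : Type u} [AddCommGroup P0] [Module R P0]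
    [AddCommGroup P1] [Module R P1] [Module.Free R P1] [Module.Finite R P1] (d : P1 →ₗ[R] P0)
    (hd : ∀ (f : P0 →ₗ[R] R) (x : P1), f (d x) ∈ IsLocalRing.maximalIdeal R)
    (N : Submodule R (P1 →ₗ[R] R)) (hN : N ⊔ LinearMap.range (LinearMap.lcomp R R d) = ⊤) :
    N = ⊤ := by
  have h1 : LinearMap.range (LinearMap.lcomp R R d) ≤
      IsLocalRing.maximalIdeal R • (⊤ : Submodule R (P1 →ₗ[R] R)) := by
    rintro _ ⟨f, rfl⟩
    have h2 := (Module.finBasis R P1).sum_dual_apply_smul_coord (LinearMap.lcomp R R d f)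
    rw [← h2]
    exact Submodule.sum_mem _ fun i _ => Submodule.smul_mem_smul (hd f _) Submodule.mem_top
  rw [eq_top_iff]
  refine Submodule.le_of_le_smul_of_le_jacobson_bot (I := IsLocalRing.maximalIdeal R)
    Module.Finite.fg_top (IsLocalRing.maximalIdeal_le_jacobson _) ?_
  rw [← hN]
  refine sup_le_sup le_rfl ?_
  rw [hN]
  exact h1

theorem Zm_equiv {P1 P0 M : Type u} [AddCommGroup P0] [Module R P0]
    [AddCommGroup P1] [Module R P1] [AddCommGroup M] [Module R M] (C : Type u) [AddCommGroup C]
    [Module R C] (d : P1 →ₗ[R] P0) (π : P0 →ₗ[R] M)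
    (h : LinearMap.range d = LinearMap.ker π) :
    Nonempty (Zm (LinearMap.ker π).subtype C ≃ₗ[R] Zm d C) := by
  let d' : P1 →ₗ[R] LinearMap.ker π := d.codRestrict _ fun x => h ▸ ⟨x, rfl⟩
  have hd' : Function.Surjective d' := by
    rintro ⟨y, hy⟩
    obtain ⟨x, hx⟩ : y ∈ LinearMap.range d := h ▸ hy
    exact ⟨x, Subtype.ext hx⟩
  have hi : Function.Injective (LinearMap.lcomp R C d') := fun a b hab => by
    ext x
    obtain ⟨y, hy⟩ := hd' x
    rw [← hy]
    exact LinearMap.congr_fun hab y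
  have he : (Zm (LinearMap.ker π).subtype C).map (LinearMap.lcomp R C d') = Zm d C := by
    unfold Zm
    rw [← LinearMap.range_comp]
    rfl
  exact ⟨(Submodule.equivMapOfInjective _ hi _).trans (LinearEquiv.ofEq _ _ he)⟩

theorem Zm_tensor [IsNoetherianRing R] [Nontrivial R] {P1 P0 : Type u} [AddCommGroup P0]
    [Module R P0] [AddCommGroup P1] [Module R P1] {C : Type u} [AddCommGroup C] [Module R C]
    (hC : SD R C) [Module.Free R P1] [Module.Finite R P1] [Module.Free R P0] [Module.Finite R P0]
    {S : Type u} [AddCommGroup S] [Module R S]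
    (d : P1 →ₗ[R] P0) (e : S ≃ₗ[R] Zm d R) (hS : AC R C S) :
    Nonempty (S ⊗[R] C ≃ₗ[R] Zm d C) := by
  have : Module.Finite R S := Module.Finite.equiv e.symm
  let ι : S →ₗ[R] (P1 →ₗ[R] R) := (Zm d R).subtype ∘ₗ e.toLinearMap
  let σ : (P0 →ₗ[R] R) →ₗ[R] S := e.symm.toLinearMap ∘ₗ (LinearMap.lcomp R R d).rangeRestrict
  have hσ : Function.Surjective σ :=
    e.symm.surjective.comp (LinearMap.surjective_rangeRestrict _)
  have hισ : ∀ f, ι (σ f) = LinearMap.lcomp R R d f := fun f => by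
    simp [ι, σ]
  have hi := rTensor_inj hC ι (Subtype.val_injective.comp e.injective) hS.bij.2
    (AC_free (N := P1 →ₗ[R] R) hC).bij.1
  let Φ : S ⊗[R] C →ₗ[R] (P1 →ₗ[R] C) :=
    dualTensorHom R P1 C ∘ₗ ι.rTensor C
  have hΦ : Function.Injective Φ := by
    have h1 : Function.Injective (dualTensorHom R P1 C) := by
      have := (dualTensorHomEquiv R P1 C).injective
      exact this
    exact h1.comp hi
  have h0 : Function.Surjective (dualTensorHom R P0 C) := by
    have := (dualTensorHomEquiv R P0 C).surjective
    exact this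
  have hr : LinearMap.range Φ = Zm d C := by
    have h1 : Φ ∘ₗ (σ.rTensor C) =
        LinearMap.lcomp R C d ∘ₗ dualTensorHom R P0 C := by
      apply TensorProduct.ext'
      intro f c
      ext x
      simp [Φ, dualTensorHom_apply, hισ]
    have h2 := congrArg LinearMap.range h1
    rw [LinearMap.range_comp_of_range_eq_top _ (LinearMap.range_eq_top.2
      (LinearMap.rTensor_surjective C hσ)),
      LinearMap.range_comp_of_range_eq_top _ (LinearMap.range_eq_top.2 h0)] at h2
    exact h2
  exact ⟨(LinearEquiv.ofInjective Φ hΦ).trans (LinearEquiv.ofEq _ _ hr)⟩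

theorem lambda_struct [IsLocalRing R] [IsNoetherianRing R] {M L : ModuleCat.{u} R}
    (hL : IsLambda R M L) : ∃ (P1 P0 : ModuleCat.{u} R) (d : ↥P1 →ₗ[R] ↥P0) (π : ↥P0 →ₗ[R] ↥M),
      Module.Finite R P1 ∧ Module.Finite R P0 ∧ Module.Free R P1 ∧ Module.Free R P0 ∧
      Function.Surjective π ∧ LinearMap.range d = LinearMap.ker π ∧
      Nonempty (L ≃ₗ[R] Zm d R) := by
  obtain ⟨T, ⟨P1, P0, d, π, ⟨hf1, hf0, ⟨hp0, hπ, hπs⟩, hr, hp1, -⟩, ⟨e⟩⟩, P, q, hfP,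
    ⟨hpP, hq, hqs⟩, ⟨eL⟩⟩ := hL
  have hF1 : Module.Free R P1 := Module.free_of_flat_of_isLocalRing
  have hF0 : Module.Free R P0 := Module.free_of_flat_of_isLocalRing
  refine ⟨P1, P0, d, π, hf1, hf0, hF1, hF0, hπ, hr, ?_⟩
  let p : (P1 →ₗ[R] R) →ₗ[R] T :=
    e.symm.toLinearMap ∘ₗ (LinearMap.range (LinearMap.lcomp R R d)).mkQ
  have hpk : LinearMap.ker p = LinearMap.range (LinearMap.lcomp R R d) := by
    rw [LinearEquiv.ker_comp, Submodule.ker_mkQ]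
  have hps : Function.Surjective p := e.symm.surjective.comp (Submodule.mkQ_surjective _)
  obtain ⟨e2⟩ := cover_ker q p hq hps hqs (fun N hN => by
    rw [hpk] at hN
    refine superfluous_dual d (fun f x => min_dual π hπs f _ ?_) N hN
    have : d x ∈ LinearMap.ker π := hr ▸ ⟨x, rfl⟩
    exact this)
  exact ⟨eL.trans (e2.trans (LinearEquiv.ofEq _ _ hpk))⟩

theorem PDz.congr {m : ℕ} {A B : Type u} [AddCommGroup A] [Module R A] [AddCommGroup B]
    [Module R B] (e : A ≃ₗ[R] B) (h : PDz R m A) : PDz R m B := fun Y _ _ i hi =>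
  Ez.congr_left e (h Y i hi)

theorem sInf_image_mem {s : Set ℕ} {n : ℕ} (h : sInf ((fun i : ℕ => (i : ℕ∞)) '' s) = n) :
    n ∈ s ∧ ∀ i ∈ s, n ≤ i := by
  have hne : ((fun i : ℕ => (i : ℕ∞)) '' s).Nonempty := by
    by_contra h1
    rw [Set.not_nonempty_iff_eq_empty] at h1
    rw [h1, sInf_empty] at h
    exact absurd h.symm (ENat.natCast_ne_top n)
  obtain ⟨i, hi, h2⟩ := csInf_mem hne
  rw [h] at h2
  have h3 : i = n := Nat.cast_injective (R := ℕ∞) h2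
  refine ⟨h3 ▸ hi, fun j hj => ?_⟩
  have h4 : sInf ((fun i : ℕ => (i : ℕ∞)) '' s) ≤ j := sInf_le ⟨j, hj, rfl⟩
  rw [h] at h4
  exact_mod_cast h4

end LambdaKit

theorem X7 (R : Type u) [CommRing R] [IsLocalRing R] [IsNoetherianRing R]
    (hCM : (rdepth R (ModuleCat.of R R) : WithBot ℕ∞) = ringKrullDim R)
    (C : ModuleCat.{u} R) (hC : IsSemidualizing R C)
    (M : ModuleCat.{u} R) (hMfin : Module.Finite R ↥M)
    (n : ℕ) (hred : IsReducedGCPerfect R C M) (hdim : gcdim R C M = n)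
    (hpd : pdim R (ModuleCat.of R (↥M →ₗ[R] R)) ≠ ⊤) :
    ∀ L : ModuleCat.{u} R, IsLambda R M L →
      rdepth R L = (n : ℕ∞) + rdepth R (ExtM R M C n) ∧
      (Module.Free R ↥L ↔
        (rdepth R (ExtM R M C n) : WithBot ℕ∞) + (n : ℕ∞) = ringKrullDim R) := by
  intro L hL
  have hsd : SD R C := IsSemidualizing.sd hC
  have hCf := hsd.fin
  obtain ⟨P1, P0, d, π, hf1, hf0, hF1, hF0, hπ, hr, ⟨eL⟩⟩ := lambda_struct hL
  obtain ⟨t, ht⟩ : ∃ t : ℕ, ringKrullDim R = t := by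
    have h1 : ringKrullDim R ≠ ⊤ := ringKrullDim_ne_top
    have h2 : ringKrullDim R ≠ ⊥ := ringKrullDim_ne_bot
    revert h1 h2
    generalize ringKrullDim R = x
    intro h1 h2
    induction x with
    | bot => exact absurd rfl h2
    | coe x =>
      induction x with
      | top => exact absurd rfl h1
      | coe x => exact ⟨x, rfl⟩
  have htR : DG R t R := by
    rw [← le_dp]
    rw [ht] at hCM
    have h1 : rdepth R (ModuleCat.of R R) = (t : ℕ∞) := by exact_mod_cast hCM
    exact h1.symm.le
  -- grade data
  have hg := (sInf_image_mem hdim).1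
  have hrg : rgrade R C M = n := hred.2.trans hdim
  obtain ⟨⟨hn0, hnE⟩, hmin⟩ := sInf_image_mem hrg
  have hE : ∀ i, 0 < i → i < n → Ez R M C i := fun i hi hin => by
    by_contra h
    have := hmin i ⟨hi, fun h' => h ((extM_iff_Ez M C i).1 h')⟩
    omega
  obtain ⟨m, hm⟩ : ∃ m, pdimLE R m (ModuleCat.of R (↥M →ₗ[R] R)) := by
    by_contra h
    push Not at h
    apply hpd
    have : {n | pdimLE R n (ModuleCat.of R (↥M →ₗ[R] R))} = ∅ := by
      ext n; simpa using h n
    rw [pdim, this, Set.image_empty, sInf_empty]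
  have hm' : PDz R m (↥M →ₗ[R] R) := PDz_of_pdimLE m _ hm
  obtain ⟨n, rfl⟩ := Nat.exists_eq_succ_of_ne_zero hn0.ne'
  obtain ⟨eE⟩ := extM_equiv M C (n+1)
  have hgm := grade_main hsd n 0 M hg Tk_zero hE
  have hEf := hgm.1
  have hEn : Nontrivial (EX R M C (n+1)) := by
    rw [← not_subsingleton_iff_nontrivial]
    intro h
    exact hnE eE.toEquiv.subsingleton
  have hle : dp R (EX R M C (n+1)) + (n+1 : ℕ) ≤ t := dpE_le hsd ht hgm.2
  have hZ := depthZ_main hsd htR n M hg hE hle P0 π hπ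
  -- S
  have hSp : PDz R (m+1) (Zm d R) := by
    obtain ⟨e⟩ := Zm_equiv R d π hr
    exact PDz.congr e (((SES.ker π hπ).Z_left (C := R)).pdz' hm')
  obtain ⟨e1⟩ := Zm_equiv C d π hr
  have hLf : Module.Finite R L := Module.Finite.equiv eL.symm
  have hLp : PDz R (m+1) L := PDz.congr eL.symm hSp
  obtain ⟨e2⟩ := Zm_tensor hsd d eL (AB1 ht htR hsd _ _ hLp).1
  have hdS : dp R L = dp R (EX R M C (n+1)) + (n+1 : ℕ) := by
    rw [← AB2 ht htR hsd _ _ hLp, dp_congr (B := Zm d C) e2,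
      ← dp_congr (B := Zm d C) e1, hZ]
  have hdE : rdepth R (ExtM R M C (n+1)) = dp R (EX R M C (n+1)) := dp_congr eE
  have hdL : rdepth R L = dp R L := rfl
  have hLt : dp R L ≤ t := hdS ▸ hle
  have hLn : Nontrivial L := by
    rw [← not_subsingleton_iff_nontrivial]
    intro h
    have h1 : DG R (t+1) L :=
      fun i _ => Ez_subsingleton_right i
    have h2 := (le_dp.2 h1).trans hLt
    exact absurd h2 (by exact_mod_cast (by omega : ¬ t + 1 ≤ t))
  refine ⟨by rw [hdL, hdE, hdS, add_comm], ?_⟩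
  have hR : ((rdepth R (ExtM R M C (n+1)) : WithBot ℕ∞) + (((n+1 : ℕ) : ℕ∞) : WithBot ℕ∞)
      = ringKrullDim R) ↔ dp R L = t := by
    rw [ht, hdE, hdS, ← WithBot.coe_add]
    exact WithBot.coe_inj (b := (t : ℕ∞))
  refine Iff.trans ?_ hR.symm
  constructor
  · intro h
    exact dp_eq_of_nontrivial ht (DG_free htR)
  · intro h
    by_contra hnf
    exact AB1' ht htR hLp hnf (le_dp.1 h.symm.le)

/-- over a Cohen-Macaulay Noetherian local ring, if `M` is reduced
`G_C`-perfect of `G_C`-dimension `n`, `G_C-dim(M^C) < ∞` and `pd(M^*) < ∞`, then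
`depth(λM) = n + depth(Ext_R^n(M,C))`; in particular `λM` is free iff
`depth(Ext_R^n(M,C)) = dim R - n`. -/
theorem statement7 [IsLocalRing R] [IsNoetherianRing R]
    (hCM : (rdepth R (ModuleCat.of R R) : WithBot ℕ∞) = ringKrullDim R)
    (C : ModuleCat.{u} R) (hC : IsSemidualizing R C)
    (M : ModuleCat.{u} R) (hMfin : Module.Finite R ↥M)
    (n : ℕ) (hred : IsReducedGCPerfect R C M) (hdim : gcdim R C M = n)
    (hdual : gcdim R C (ModuleCat.of R (↥M →ₗ[R] ↥C)) ≠ ⊤)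
    (hpd : pdim R (ModuleCat.of R (↥M →ₗ[R] R)) ≠ ⊤) :
    ∀ L : ModuleCat.{u} R, IsLambda R M L →
      rdepth R L = (n : ℕ∞) + rdepth R (ExtM R M C n) ∧
      (Module.Free R ↥L ↔
        (rdepth R (ExtM R M C n) : WithBot ℕ∞) + (n : ℕ∞) = ringKrullDim R) := by
  exact X7 R hCM C hC M hMfin n hred hdim hpd

end
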